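/- Let 5 ≤ n ≤ 12 and let P be a finite-volume non-compact right-angled convex hyperbolic n-polyhedron. Then the number of ideal vertices of P satisfies v_∞(P) ≥ vₙ, where (v₅, v₆, v₇, v₈, v₉, v₁₀, v₁₁, v₁₂) = (2, 6, 23, 135, 1704, 182044, 1674504428, 127466960740760088). -/

import Mathlib

open scoped BigOperators

noncomputable section

/-- The Minkowski bilinear form `⟨x,y⟩ = -x₀y₀ + x₁y₁ + ⋯ + xₙyₙ` on `ℝ^{n+1}`. -/
def mink {n : ℕ} (x y : Fin (n + 1) → ℝ) : ℝ :=
  -(x 0 * y 0) + ∑ i : Fin n, x i.succ * y i.succ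

/-- The hyperboloid model of the hyperbolic space `ℍⁿ`. -/
def Hyperboloid (n : ℕ) : Set (Fin (n + 1) → ℝ) :=
  {x | mink x x = -1 ∧ 0 < x 0}

/-- The Klein projection `x ↦ (x₁/x₀, …, xₙ/x₀)` of the hyperboloid onto the unit ball. -/
def kleinMap {n : ℕ} (x : Fin (n + 1) → ℝ) : EuclideanSpace ℝ (Fin n) :=
  WithLp.toLp 2 fun i => x i.succ / x 0

/-- Dimension of a subset of a real vector space: the rank of its vector span. -/
def sdim {n : ℕ} (s : Set (EuclideanSpace ℝ (Fin n))) : ℕ :=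
  Module.finrank ℝ (vectorSpan ℝ s)

/-- A convex hyperbolic `n`-polyhedron: a finite intersection of hyperbolic half-spaces
`H_{eᵢ}⁻ = {x : ⟨eᵢ,x⟩ ≤ 0}` (with `⟨eᵢ,eᵢ⟩ = 1`) having nonempty interior
(equivalently, its Klein-model image has nonempty interior in `ℝⁿ`). -/
structure HypPolyhedron (n : ℕ) where
  m : ℕ
  e : Fin m → (Fin (n + 1) → ℝ)
  unit : ∀ i, mink (e i) (e i) = 1
  nonempty_int :
    (interior (kleinMap '' {x ∈ Hyperboloid n | ∀ i, mink (e i) x ≤ 0})).Nonempty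

namespace HypPolyhedron

variable {n : ℕ} (P : HypPolyhedron n)

/-- The set of points of the polyhedron in the hyperboloid model. -/
def carrier : Set (Fin (n + 1) → ℝ) :=
  {x ∈ Hyperboloid n | ∀ i, mink (P.e i) x ≤ 0}

/-- `P̄`: the closure of the Klein-model image of the polyhedron in the closed unit ball. -/
def cl : Set (EuclideanSpace ℝ (Fin n)) :=
  closure (kleinMap '' P.carrier)

/-- The `k`-faces of `P`: the `k`-dimensional (nonempty) exposed faces of `P̄`. -/
def faces (k : ℕ) : Set (Set (EuclideanSpace ℝ (Fin n))) :=
  {F | IsExposed ℝ P.cl F ∧ F.Nonempty ∧ sdim F = k}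

/-- `a_k(P)`: the number of `k`-faces of `P`. -/
def a (k : ℕ) : ℕ := (P.faces k).ncard

/-- Vertices of `P`: the points of `0`-dimensional exposed faces of `P̄`. -/
def verts : Set (EuclideanSpace ℝ (Fin n)) :=
  {v | IsExposed ℝ P.cl {v}}

/-- Ideal vertices: vertices lying on the unit sphere. -/
def idealVerts : Set (EuclideanSpace ℝ (Fin n)) :=
  {v ∈ P.verts | ‖v‖ = 1}

/-- Finite vertices: vertices lying in the open unit ball. -/
def finiteVerts : Set (EuclideanSpace ℝ (Fin n)) :=
  {v ∈ P.verts | ‖v‖ < 1}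

/-- `v_∞(P)`: the number of ideal vertices of `P`. -/
def vInf : ℕ := P.idealVerts.ncard

/-- The bounding hyperplane `H_e` contains the face `F`. -/
def faceInHyperplane (e : Fin (n + 1) → ℝ) (F : Set (EuclideanSpace ℝ (Fin n))) : Prop :=
  ∀ x ∈ P.carrier, kleinMap x ∈ F → mink e x = 0

/-- `P` is right-angled: whenever two distinct bounding hyperplanes both contain an
`(n-2)`-dimensional face of `P`, the corresponding unit normals are orthogonal,
i.e. the dihedral angle is `π/2`. -/
def IsRightAngled : Prop :=
  ∀ i j : Fin P.m, i ≠ j →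
    (∃ F ∈ P.faces (n - 2), P.faceInHyperplane (P.e i) F ∧ P.faceInHyperplane (P.e j) F) →
    mink (P.e i) (P.e j) = 0

/-- `P` has finite volume: `P̄` is the convex hull of its (finitely many) vertices. -/
def FiniteVolume : Prop :=
  P.verts.Finite ∧ P.cl = convexHull ℝ P.verts

/-- `P` is compact: finite volume and all vertices are finite. -/
def IsCompactPoly : Prop :=
  P.FiniteVolume ∧ ∀ v ∈ P.verts, ‖v‖ < 1

/-- `P` is ideal: finite volume and all vertices are ideal. -/
def IsIdeal : Prop :=
  P.FiniteVolume ∧ ∀ v ∈ P.verts, ‖v‖ = 1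

end HypPolyhedron

/-- `ν(P) = a_{n-1}(P) + v_∞(P)` ranging over the family `𝒫ⁿ` of finite-volume non-compact
right-angled convex hyperbolic `n`-polyhedra. -/
def nuSet (n : ℕ) : Set ℕ :=
  {m | ∃ P : HypPolyhedron n,
        P.FiniteVolume ∧ P.IsRightAngled ∧ ¬ P.IsCompactPoly ∧ P.a (n - 1) + P.vInf = m}

/-- `νₙ = sInf {ν(P) : P ∈ 𝒫ⁿ}` (with `sInf ∅ = 0`). -/
def nu (n : ℕ) : ℕ := sInf (nuSet n)

/-- The table of lower bounds `vₙ` for the number of ideal vertices. -/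
def idealVertexBound : ℕ → ℕ
  | 5 => 2
  | 6 => 6
  | 7 => 23
  | 8 => 135
  | 9 => 1704
  | 10 => 182044
  | 11 => 1674504428
  | 12 => 127466960740760088
  | _ => 0

/-!
Two walls of a right-angled polyhedron are orthogonal, asymptotic or disjoint, so the Gram matrix of
an irredundant system of walls has off-diagonal entries `0` or at most `-1`. The faces are then the
sets of pairwise orthogonal walls, every finite vertex is a simple corner, and the link of every
ideal vertex is a cube.

In dimension five, order the points of the polyhedron by a generic linear functional. Every face has
one highest and one lowest vertex, so counting at each vertex the faces of which it is the highest
or the lowest one gives twice the face numbers. The count at a vertex depends on the functional, but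
its combination for `f₂ + 4 f₅ - 2 f₄` is always `4` at a finite vertex and `20` at an ideal one,
whence `f₂ + 4 = 2 v + 8 v_∞ + 2 f₄`, where `v` counts all vertices. A right-angled polygon has at
least five vertices, ideal ones counted twice; summed over the two-dimensional faces this reads
`5 f₂ ≤ 10 v + 54 v_∞`. Together, `5 f₄ ≤ 7 v_∞ + 10`, and `f₄ ≥ 11`, `v_∞ ≥ 7` follow.

The dimension is raised by two counts. Besides a facet `F`, a polyhedron has at least as many facets
as `F` has facets and ideal vertices together: those orthogonal to `F` and those asymptotic to `F`.
An ideal vertex of a `(d + 1)`-dimensional polyhedron lies on exactly `2 d` facets.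
-/

section Minkowski

variable {n : ℕ} {v w x : Fin (n + 1) → ℝ}

lemma mink_comm (x y : Fin (n + 1) → ℝ) : mink x y = mink y x := by
  simp [mink, mul_comm]

/-- The Minkowski form as a bilinear map. It carries no more information than `mink`; its role is
to make the lemmas on linear maps available. -/
def minkForm (n : ℕ) : LinearMap.BilinForm ℝ (Fin (n + 1) → ℝ) :=
  LinearMap.mk₂ ℝ mink
    (fun x y z => by simp only [mink, Pi.add_apply, add_mul, Finset.sum_add_distrib]; ring)
    (fun c x y => by
      simp only [mink, Pi.smul_apply, smul_eq_mul, mul_assoc, mul_add, mul_neg, Finset.mul_sum])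
    (fun x y z => by simp only [mink, Pi.add_apply, mul_add, Finset.sum_add_distrib]; ring)
    (fun c x y => by
      simp only [mink, Pi.smul_apply, smul_eq_mul, mul_left_comm _ c, mul_add, mul_neg,
        Finset.mul_sum])

@[simp] lemma minkForm_apply (x y : Fin (n + 1) → ℝ) : minkForm n x y = mink x y := rfl

@[simp] lemma mink_add_right (x y z : Fin (n + 1) → ℝ) :
    mink x (y + z) = mink x y + mink x z :=
  map_add (minkForm n x) y z

@[simp] lemma mink_sub_right (x y z : Fin (n + 1) → ℝ) :
    mink x (y - z) = mink x y - mink x z :=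
  map_sub (minkForm n x) y z

@[simp] lemma mink_smul_right (c : ℝ) (x y : Fin (n + 1) → ℝ) :
    mink x (c • y) = c * mink x y :=
  map_smul (minkForm n x) c y

@[simp] lemma mink_zero_right (x : Fin (n + 1) → ℝ) : mink x 0 = 0 :=
  map_zero (minkForm n x)

lemma mink_sum_right {ι : Type*} (s : Finset ι) (x : Fin (n + 1) → ℝ)
    (f : ι → Fin (n + 1) → ℝ) : mink x (∑ i ∈ s, f i) = ∑ i ∈ s, mink x (f i) :=
  map_sum (minkForm n x) f s

@[simp] lemma mink_add_left (x y z : Fin (n + 1) → ℝ) :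
    mink (x + y) z = mink x z + mink y z :=
  LinearMap.map_add₂ (minkForm n) x y z

@[simp] lemma mink_sub_left (x y z : Fin (n + 1) → ℝ) :
    mink (x - y) z = mink x z - mink y z :=
  LinearMap.map_sub₂ (minkForm n) x y z

@[simp] lemma mink_smul_left (c : ℝ) (x y : Fin (n + 1) → ℝ) :
    mink (c • x) y = c * mink x y :=
  LinearMap.map_smul₂ (minkForm n) c x y

lemma continuous_mink_right (x : Fin (n + 1) → ℝ) : Continuous (mink x) :=
  (minkForm n x).continuous_of_finiteDimensional

/-- The closed forward light cone. -/
def futureCone (n : ℕ) : Set (Fin (n + 1) → ℝ) := {x | mink x x ≤ 0 ∧ 0 ≤ x 0}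

lemma mink_self_of_apply_zero (hx : x 0 = 0) : mink x x = ∑ i : Fin n, x i.succ ^ 2 := by
  simp [mink, hx, sq]

lemma mink_self_nonneg (hx : x 0 = 0) : 0 ≤ mink x x := by
  rw [mink_self_of_apply_zero hx]
  positivity

lemma eq_zero_of_mink_self_nonpos (hx : x 0 = 0) (h : mink x x ≤ 0) : x = 0 := by
  rw [mink_self_of_apply_zero hx] at h
  have hsucc := (Finset.sum_eq_zero_iff_of_nonneg fun i _ => sq_nonneg (x (Fin.succ i))).1
    (h.antisymm (Finset.sum_nonneg fun i _ => sq_nonneg _))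
  funext i
  cases i using Fin.cases with
  | zero => exact hx
  | succ j => simpa using hsucc j (Finset.mem_univ j)

lemma ne_zero_of_mink_self_neg (hx : mink x x < 0) : x ≠ 0 := by
  rintro rfl
  simp at hx

lemma eq_smul_of_mink_eq_zero (hv : mink v v ≤ 0) (hv0 : 0 < v 0) (hvw : mink v w = 0)
    (hw : mink w w ≤ 0) : w = (w 0 / v 0) • v := by
  set k := w 0 / v 0 with hk
  have hzero : (w - k • v) 0 = 0 := by simp [hk, hv0.ne']
  have hcausal : mink (w - k • v) (w - k • v) ≤ 0 := by
    simp only [mink_sub_left, mink_sub_right, mink_smul_left, mink_smul_right, hvw,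
      mink_comm w v]
    nlinarith [sq_nonneg k]
  exact sub_eq_zero.1 (eq_zero_of_mink_self_nonpos hzero hcausal)

lemma eq_zero_of_mink_eq_zero (hv : mink v v < 0) (hv0 : 0 < v 0) (hvw : mink v w = 0)
    (hw : mink w w ≤ 0) : w = 0 := by
  have h := eq_smul_of_mink_eq_zero hv.le hv0 hvw hw
  rw [h, mink_smul_right] at hvw
  rw [h, (mul_eq_zero.1 hvw).resolve_right hv.ne, zero_smul]

/-- The reversed Cauchy–Schwarz inequality, qualitatively. -/
lemma mink_neg_of_forward (hx : mink x x < 0) (hx0 : 0 < x 0) (hv : mink v v ≤ 0)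
    (hv0 : 0 < v 0) : mink v x < 0 := by
  by_contra! hvx
  set k := v 0 / x 0 with hk
  have hkpos : 0 < k := div_pos hv0 hx0
  have h := mink_self_nonneg (x := v - k • x) (by simp [hk, hx0.ne'])
  simp only [mink_sub_left, mink_sub_right, mink_smul_left, mink_smul_right,
    mink_comm x v] at h
  nlinarith [mul_pos hkpos hkpos, mul_nonneg hkpos.le hvx]

end Minkowski

section Subsets

variable {α : Type*} [DecidableEq α]

lemma sum_powerset_sdiff {β : Type*} [AddCommMonoid β] (T : Finset α) (f : Finset α → β) :
    ∑ C ∈ T.powerset, f (T \ C) = ∑ C ∈ T.powerset, f C := by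
  refine Finset.sum_nbij' (T \ ·) (T \ ·) ?_ ?_ ?_ ?_ fun _ _ => rfl <;> intro C hC
  · exact Finset.mem_powerset.2 Finset.sdiff_subset
  · exact Finset.mem_powerset.2 Finset.sdiff_subset
  · exact Finset.sdiff_sdiff_eq_self (Finset.mem_powerset.1 hC)
  · exact Finset.sdiff_sdiff_eq_self (Finset.mem_powerset.1 hC)

lemma sum_powersetCard_sum_powerset_sdiff (H : Finset α) (d : ℕ) (f : Finset α → ℤ) :
    ∑ Q ∈ H.powersetCard d, ∑ C ∈ (H \ Q).powerset, f C =
      ∑ C ∈ H.powerset, (H \ C).card.choose d * f C := by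
  rw [Finset.sum_comm' (t' := H.powerset) (s' := fun C => (H \ C).powersetCard d)]
  · simp only [Finset.sum_const, Finset.card_powersetCard, nsmul_eq_mul]
  · intro Q C
    simp only [Finset.mem_powersetCard, Finset.mem_powerset, Finset.subset_sdiff,
      disjoint_comm (a := C)]
    tauto

lemma sum_powersetCard_sum_cube (H : Finset α) (d : ℕ) (χ : Finset α → ℤ) :
    ∑ Q ∈ H.powersetCard d, ∑ C ∈ (H \ Q).powerset, ((1 - χ (H \ ((H \ Q) \ C))) + χ C) =
      2 ^ (H.card - d) * H.card.choose d +
        ∑ C ∈ H.powerset, (((H \ C).card.choose d : ℤ) - C.card.choose d) * χ C := by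
  have hone : ∑ Q ∈ H.powersetCard d, ∑ _C ∈ (H \ Q).powerset, (1 : ℤ) =
      2 ^ (H.card - d) * H.card.choose d := by
    rw [Finset.sum_congr rfl fun Q hQ => by
      rw [Finset.sum_const, Finset.card_powerset, Finset.card_sdiff_of_subset
        (Finset.mem_powersetCard.1 hQ).1, (Finset.mem_powersetCard.1 hQ).2]]
    simp [mul_comm]
  have hcompl : ∑ Q ∈ H.powersetCard d, ∑ C ∈ (H \ Q).powerset, χ (H \ ((H \ Q) \ C)) =
      ∑ C ∈ H.powerset, (C.card.choose d : ℤ) * χ C := by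
    rw [Finset.sum_congr rfl fun Q _ => sum_powerset_sdiff (H \ Q) fun C => χ (H \ C),
      sum_powersetCard_sum_powerset_sdiff, ← sum_powerset_sdiff H fun C => (C.card.choose d) * χ C]
  simp only [Finset.sum_add_distrib, Finset.sum_sub_distrib, sub_mul, hone, hcompl,
    sum_powersetCard_sum_powerset_sdiff]
  ring

lemma sum_powersetCard_subset_or_disjoint (X U : Finset α) (m : ℕ) :
    ∑ Q ∈ X.powersetCard m, ((if Q ⊆ U then (1 : ℤ) else 0) + if Disjoint Q U then 1 else 0) =
      (X ∩ U).card.choose m + (X \ U).card.choose m := by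
  have hsub : (X.powersetCard m).filter (· ⊆ U) = (X ∩ U).powersetCard m := by
    ext Q
    simp only [Finset.mem_filter, Finset.mem_powersetCard, Finset.subset_inter_iff]
    tauto
  have hdisj : (X.powersetCard m).filter (Disjoint · U) = (X \ U).powersetCard m := by
    ext Q
    simp only [Finset.mem_filter, Finset.mem_powersetCard, Finset.subset_sdiff]
    tauto
  rw [Finset.sum_add_distrib, Finset.sum_boole, Finset.sum_boole, hsub, hdisj,
    Finset.card_powersetCard, Finset.card_powersetCard]

end Subsets

lemma exists_pos_forall_add_mul_neg {ι : Type*} [Finite ι] (a b : ι → ℝ) :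
    ∃ ε > 0, ∀ i, a i < 0 → a i + ε * b i < 0 ∧ a i - ε * b i < 0 := by
  have h : ∀ i, ∀ᶠ ε in nhdsWithin (0 : ℝ) (Set.Ioi 0),
      a i < 0 → a i + ε * b i < 0 ∧ a i - ε * b i < 0 := by
    intro i
    by_cases hi : a i < 0
    · have hadd : Filter.Tendsto (fun ε : ℝ => a i + ε * b i) (nhds 0) (nhds (a i)) :=
        (by fun_prop : Continuous fun ε : ℝ => a i + ε * b i).tendsto' _ _ (by simp)
      have hsub : Filter.Tendsto (fun ε : ℝ => a i - ε * b i) (nhds 0) (nhds (a i)) :=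
        (by fun_prop : Continuous fun ε : ℝ => a i - ε * b i).tendsto' _ _ (by simp)
      filter_upwards [nhdsWithin_le_nhds (hadd.eventually_lt_const hi),
        nhdsWithin_le_nhds (hsub.eventually_lt_const hi)] with ε h₁ h₂ _
      exact ⟨h₁, h₂⟩
    · exact Filter.Eventually.of_forall fun ε h => absurd h hi
  obtain ⟨ε, hε, hpos⟩ := ((Filter.eventually_all.2 h).and self_mem_nhdsWithin).exists
  exact ⟨ε, hpos, hε⟩

lemma exists_dual_apply_ne_zero_of_finite {V : Type*} [AddCommGroup V] [Module ℝ V]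
    {Z : Set V} (hZ : Z.Finite) : ∃ l : V →ₗ[ℝ] ℝ, ∀ z ∈ Z, z ≠ 0 → l z ≠ 0 := by
  have := (hZ.sep (· ≠ 0)).to_subtype
  obtain ⟨l, hl⟩ := Module.exists_dual_forall_apply_ne_zero (K := ℝ)
    (fun z : {z ∈ Z | z ≠ 0} => (z : V)) fun z => z.2.2
  exact ⟨l, fun z hz hz0 => hl ⟨z, hz, hz0⟩⟩

lemma card_add_one_eq_finrank {V κ : Type*} [AddCommGroup V] [Module ℝ V]
    [FiniteDimensional ℝ V] [Fintype κ] [DecidableEq κ] {v : V} (hv : v ≠ 0)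
    (f : κ → V →ₗ[ℝ] ℝ) (b : κ → V) (hfv : ∀ k, f k v = 0)
    (hfb : ∀ k j, f k (b j) = if k = j then 1 else 0)
    (hspan : ∀ x, ∃ a : ℝ, x = a • v + ∑ k, f k x • b k) :
    Fintype.card κ + 1 = Module.finrank ℝ V := by
  have hsurj : LinearMap.range (LinearMap.pi f) = ⊤ := by
    refine LinearMap.range_eq_top.2 fun c => ⟨∑ k, c k • b k, funext fun k => ?_⟩
    simp [hfb]
  have hker : LinearMap.ker (LinearMap.pi f) = Submodule.span ℝ {v} := by
    ext x
    rw [Submodule.mem_span_singleton, LinearMap.mem_ker]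
    constructor
    · intro hx
      obtain ⟨a, ha⟩ := hspan x
      have hx' : ∀ k, f k x = 0 := congrFun hx
      exact ⟨a, by simpa [hx'] using ha.symm⟩
    · rintro ⟨a, rfl⟩
      exact funext fun k => by simp [hfv]
  have hrank := (LinearMap.pi f).finrank_range_add_finrank_ker
  rwa [hsurj, finrank_top, hker, finrank_span_singleton hv,
    Module.finrank_fintype_fun_eq_card] at hrank

/-- A cone in Minkowski space cut out by unit spacelike vectors that are pairwise orthogonal or
have product at most `-1`, having an interior timelike point and contained in the closed forward
light cone: the cone over a right-angled polyhedron of finite volume. -/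
structure RightAngledCone (n : ℕ) (ι : Type*) where
  e : ι → Fin (n + 1) → ℝ
  unit : ∀ i, mink (e i) (e i) = 1
  gram : ∀ i j, i ≠ j → mink (e i) (e j) = 0 ∨ mink (e i) (e j) ≤ -1
  pt : Fin (n + 1) → ℝ
  pt_timelike : mink pt pt < 0
  pt_neg : ∀ i, mink (e i) pt < 0
  causal : ∀ x, (∀ i, mink (e i) x ≤ 0) → x ∈ futureCone n

namespace RightAngledCone

variable {n : ℕ} {ι : Type*} (D : RightAngledCone n ι)

/-- The points of the cone. -/
def cone : Set (Fin (n + 1) → ℝ) := {x | ∀ i, mink (D.e i) x ≤ 0}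

/-- The part of the cone lying on the walls in `S`. When `S` is a clique this is the cone over a
face of codimension `S.card`, and every face arises in this way. -/
def faceCone (S : Finset ι) : Set (Fin (n + 1) → ℝ) :=
  {x | x ∈ D.cone ∧ ∀ s ∈ S, mink (D.e s) x = 0}

/-- The slice of `D.faceCone S` at height one, a compact convex set projectively equivalent to the
face. -/
def faceSlice (S : Finset ι) : Set (Fin (n + 1) → ℝ) := {x | x ∈ D.faceCone S ∧ x 0 = 1}

/-- The vertices of the polyhedron, finite or ideal, as points at height one. -/
def verts : Set (Fin (n + 1) → ℝ) := (D.faceSlice ∅).extremePoints ℝ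

/-- A set of pairwise orthogonal walls. -/
def IsClique (S : Finset ι) : Prop :=
  ∀ i ∈ S, ∀ j ∈ S, i ≠ j → mink (D.e i) (D.e j) = 0

/-- The orthogonal projection of the interior point to the span of the face of a clique. It lies
in the relative interior of the face. -/
def proj (S : Finset ι) : Fin (n + 1) → ℝ := D.pt - ∑ s ∈ S, mink (D.e s) D.pt • D.e s

variable {D} {v w x y : Fin (n + 1) → ℝ} {S R : Finset ι} {i j : ι}

lemma gram_nonpos (hij : i ≠ j) : mink (D.e i) (D.e j) ≤ 0 := by
  rcases D.gram i j hij with h | h <;> linarith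

lemma pos_of_mem_cone (hx : x ∈ D.cone) (h : x ≠ 0) : 0 < x 0 := by
  obtain ⟨hcausal, hnonneg⟩ := D.causal x hx
  exact hnonneg.lt_of_ne fun h0 => h (eq_zero_of_mink_self_nonpos h0.symm hcausal)

lemma pt_pos : 0 < D.pt 0 :=
  pos_of_mem_cone (fun i => (D.pt_neg i).le) (ne_zero_of_mink_self_neg D.pt_timelike)

lemma mink_pt_neg (hx : x ∈ D.cone) (h : x ≠ 0) : mink x D.pt < 0 :=
  mink_neg_of_forward D.pt_timelike pt_pos (D.causal x hx).1 (pos_of_mem_cone hx h)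

lemma normalize_mem_faceSlice (hx : x ∈ D.faceCone S) (h : x ≠ 0) :
    (x 0)⁻¹ • x ∈ D.faceSlice S := by
  have hpos := pos_of_mem_cone hx.1 h
  refine ⟨⟨fun i => ?_, fun s hs => by simp [hx.2 s hs]⟩, by simp [hpos.ne']⟩
  rw [mink_smul_right]
  exact mul_nonpos_of_nonneg_of_nonpos (inv_nonneg.2 hpos.le) (hx.1 i)

lemma faceCone_anti (h : S ⊆ R) : D.faceCone R ⊆ D.faceCone S :=
  fun _ hx => ⟨hx.1, fun s hs => hx.2 s (h hs)⟩

lemma mem_cone_of_mem_verts (hv : v ∈ D.verts) : v ∈ D.cone :=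
  (extremePoints_subset hv).1.1

lemma apply_zero_of_mem_verts (hv : v ∈ D.verts) : v 0 = 1 :=
  (extremePoints_subset hv).2

lemma apply_zero_pos_of_mem_verts (hv : v ∈ D.verts) : 0 < v 0 :=
  apply_zero_of_mem_verts hv ▸ one_pos

lemma ne_zero_of_mem_verts (hv : v ∈ D.verts) : v ≠ 0 := by
  rintro rfl
  simpa using apply_zero_of_mem_verts hv

lemma mink_self_nonpos_of_mem_verts (hv : v ∈ D.verts) : mink v v ≤ 0 :=
  (D.causal v (mem_cone_of_mem_verts hv)).1

lemma IsClique.subset (hS : D.IsClique S) (h : R ⊆ S) : D.IsClique R :=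
  fun i hi j hj => hS i (h hi) j (h hj)

lemma IsClique.mink_sum (hS : D.IsClique S) (hi : i ∈ S) (c : ι → ℝ) :
    mink (D.e i) (∑ s ∈ S, c s • D.e s) = c i := by
  rw [mink_sum_right, Finset.sum_eq_single_of_mem i hi]
  · rw [mink_smul_right, D.unit, mul_one]
  · intro j hj hji
    rw [mink_smul_right, hS i hi j hj hji.symm, mul_zero]

lemma mink_proj (S : Finset ι) (x : Fin (n + 1) → ℝ) :
    mink x (D.proj S) = mink x D.pt - ∑ s ∈ S, mink (D.e s) D.pt * mink x (D.e s) := by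
  simp [proj, mink_sum_right]

lemma mink_proj_neg (hi : i ∉ S) : mink (D.e i) (D.proj S) < 0 := by
  have hsum : 0 ≤ ∑ s ∈ S, mink (D.e s) D.pt * mink (D.e i) (D.e s) :=
    Finset.sum_nonneg fun s hs => mul_nonneg_of_nonpos_of_nonpos (D.pt_neg s).le
      (gram_nonpos fun h => hi (h ▸ hs))
  rw [mink_proj]
  linarith [D.pt_neg i]

namespace IsClique

lemma mink_proj_eq_zero (hS : D.IsClique S) (hi : i ∈ S) : mink (D.e i) (D.proj S) = 0 := by
  rw [proj, mink_sub_right, hS.mink_sum hi fun s => mink (D.e s) D.pt, sub_self]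

lemma proj_mem_faceCone (hS : D.IsClique S) : D.proj S ∈ D.faceCone S := by
  refine ⟨fun i => ?_, fun s hs => hS.mink_proj_eq_zero hs⟩
  by_cases hi : i ∈ S
  · exact (hS.mink_proj_eq_zero hi).le
  · exact (mink_proj_neg hi).le

lemma proj_timelike (hS : D.IsClique S) : mink (D.proj S) (D.proj S) < 0 := by
  have hpt : mink (D.proj S) (D.proj S) = mink D.pt (D.proj S) := by
    rw [mink_proj, Finset.sum_eq_zero fun s hs => by
      rw [mink_comm (D.proj S), hS.mink_proj_eq_zero hs, mul_zero], sub_zero, mink_comm]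
  have hsum : 0 ≤ ∑ s ∈ S, mink (D.e s) D.pt * mink D.pt (D.e s) :=
    Finset.sum_nonneg fun s _ => mink_comm D.pt (D.e s) ▸ mul_self_nonneg _
  rw [hpt, mink_proj]
  linarith [D.pt_timelike]

lemma proj_ne_zero (hS : D.IsClique S) : D.proj S ≠ 0 :=
  ne_zero_of_mink_self_neg hS.proj_timelike

lemma mink_vert_proj_neg (hS : D.IsClique S) (hv : v ∈ D.verts) : mink v (D.proj S) < 0 :=
  mink_neg_of_forward hS.proj_timelike
    (pos_of_mem_cone hS.proj_mem_faceCone.1 hS.proj_ne_zero)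
    (mink_self_nonpos_of_mem_verts hv) (apply_zero_pos_of_mem_verts hv)

end IsClique

section Compactness

lemma isClosed_faceSlice : IsClosed (D.faceSlice S) := by
  have hset : D.faceSlice S =
      ((⋂ i, {x | mink (D.e i) x ≤ 0}) ∩ ⋂ s ∈ S, {x | mink (D.e s) x = 0}) ∩ {x | x 0 = 1} := by
    ext x
    simp [faceSlice, faceCone, cone]
  rw [hset]
  exact ((isClosed_iInter fun i => isClosed_le (continuous_mink_right _) continuous_const).inter
    (isClosed_biInter fun s _ => isClosed_eq (continuous_mink_right _) continuous_const)).inter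
    (isClosed_eq (continuous_apply 0) continuous_const)

lemma isCompact_faceSlice : IsCompact (D.faceSlice S) := by
  refine isCompact_Icc (a := fun _ => -1) (b := fun _ => 1) |>.of_isClosed_subset
    isClosed_faceSlice fun x hx => ?_
  have hsum : ∑ i : Fin n, x i.succ ^ 2 ≤ 1 := by
    have := (D.causal x hx.1.1).1
    simp only [mink, hx.2, ← sq] at this
    linarith
  have habs : ∀ i, -1 ≤ x i ∧ x i ≤ 1 := by
    intro i
    cases i using Fin.cases with
    | zero => norm_num [hx.2]
    | succ j =>
      rw [← abs_le, ← sq_le_one_iff_abs_le_one]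
      exact (Finset.single_le_sum (f := fun i : Fin n => x i.succ ^ 2)
        (fun i _ => sq_nonneg _) (Finset.mem_univ j)).trans hsum
  exact ⟨fun i => (habs i).1, fun i => (habs i).2⟩

lemma IsClique.faceSlice_nonempty (hS : D.IsClique S) : (D.faceSlice S).Nonempty :=
  ⟨_, normalize_mem_faceSlice hS.proj_mem_faceCone hS.proj_ne_zero⟩

lemma isExtreme_faceSlice (S : Finset ι) : IsExtreme ℝ (D.faceSlice ∅) (D.faceSlice S) := by
  refine ⟨fun x hx => ⟨faceCone_anti (Finset.empty_subset S) hx.1, hx.2⟩, ?_⟩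
  rintro x hx y hy z hz ⟨a, b, ha, hb, -, rfl⟩
  refine ⟨⟨hx.1.1, fun s hs => ?_⟩, hx.2⟩
  have hz0 := hz.1.2 s hs
  simp only [mink_add_right, mink_smul_right] at hz0
  have hxs := mul_nonpos_of_nonneg_of_nonpos ha.le (hx.1.1 s)
  have hys := mul_nonpos_of_nonneg_of_nonpos hb.le (hy.1.1 s)
  exact (mul_eq_zero.1 (by linarith : a * mink (D.e s) x = 0)).resolve_left ha.ne'

lemma IsClique.exists_vert_max (hS : D.IsClique S) (l : (Fin (n + 1) → ℝ) →ₗ[ℝ] ℝ) :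
    ∃ v ∈ D.verts, v ∈ D.faceCone S ∧ ∀ x ∈ D.faceCone S, l x ≤ x 0 * l v := by
  let l' : StrongDual ℝ (Fin (n + 1) → ℝ) := LinearMap.toContinuousLinearMap l
  have hexp : IsExposed ℝ (D.faceSlice S) (l'.toExposed (D.faceSlice S)) :=
    ContinuousLinearMap.toExposed.isExposed
  have hne : (l'.toExposed (D.faceSlice S)).Nonempty := by
    obtain ⟨x, hx, hmax⟩ :=
      isCompact_faceSlice.exists_isMaxOn hS.faceSlice_nonempty l'.continuous.continuousOn
    exact ⟨x, hx, fun y hy => hmax hy⟩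
  obtain ⟨v, hv⟩ := (hexp.isCompact isCompact_faceSlice).extremePoints_nonempty hne
  have hvmax : v ∈ l'.toExposed (D.faceSlice S) := hv.1
  refine ⟨v, ((isExtreme_faceSlice S).trans
    hexp.isExtreme).extremePoints_subset_extremePoints hv, hvmax.1.1, fun x hx => ?_⟩
  rcases eq_or_ne x 0 with rfl | h0
  · simp
  · have h : l ((x 0)⁻¹ • x) ≤ l v := hvmax.2 _ (normalize_mem_faceSlice hx h0)
    rwa [map_smul, smul_eq_mul, inv_mul_le_iff₀ (pos_of_mem_cone hx.1 h0)] at h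

end Compactness

section Tight

lemma add_smul_mem_faceSlice {ε : ℝ} (hv : v ∈ D.faceSlice ∅) (hw0 : w 0 = 0)
    (htight : ∀ i, mink (D.e i) v = 0 → mink (D.e i) w = 0)
    (hε : ∀ i, mink (D.e i) v < 0 → mink (D.e i) v + ε * mink (D.e i) w < 0) :
    v + ε • w ∈ D.faceSlice ∅ := by
  refine ⟨⟨fun i => ?_, by simp⟩, by simp [hv.2, hw0]⟩
  rw [mink_add_right, mink_smul_right]
  rcases (hv.1.1 i).lt_or_eq with hi | hi
  · exact (hε i hi).le
  · simp [hi, htight i hi]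

variable [Finite ι]

/-- A direction annihilated by all walls through `v` could be followed from `v` both ways. -/
lemma eq_zero_of_tight (hv : v ∈ D.verts) (hw0 : w 0 = 0)
    (htight : ∀ i, mink (D.e i) v = 0 → mink (D.e i) w = 0) : w = 0 := by
  obtain ⟨ε, hε, h⟩ := exists_pos_forall_add_mul_neg (fun i => mink (D.e i) v)
    (fun i => mink (D.e i) w)
  have hadd : v + ε • w ∈ D.faceSlice ∅ :=
    add_smul_mem_faceSlice hv.1 hw0 htight fun i hi => (h i hi).1
  have hsub : v + (-ε) • w ∈ D.faceSlice ∅ :=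
    add_smul_mem_faceSlice hv.1 hw0 htight fun i hi => by
      simpa [sub_eq_add_neg] using (h i hi).2
  have hseg : v ∈ openSegment ℝ (v + ε • w) (v + (-ε) • w) :=
    ⟨1 / 2, 1 / 2, by norm_num, by norm_num, by norm_num, by module⟩
  simpa [hε.ne'] using hv.2 hadd hsub hseg

lemma eq_smul_of_tight (hv : v ∈ D.verts)
    (hy : ∀ i, mink (D.e i) v = 0 → mink (D.e i) y = 0) : y = y 0 • v := by
  refine sub_eq_zero.1 (eq_zero_of_tight hv ?_ fun i hi => ?_)
  · simp [apply_zero_of_mem_verts hv]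
  · simp [hi, hy i hi]

lemma finite_verts : D.verts.Finite := by
  refine Set.Finite.of_injOn (f := fun v => {i | mink (D.e i) v = 0}) (fun _ _ => Set.mem_univ _)
    (fun v hv w hw h => ?_) Set.finite_univ
  have hvw := eq_smul_of_tight hv (y := w) fun i hi => (Set.ext_iff.1 h i).1 hi
  rw [hvw, apply_zero_of_mem_verts hw, one_smul]

end Tight

variable [Fintype ι]

variable (D) in
/-- The walls through a point. -/
def tight (x : Fin (n + 1) → ℝ) : Finset ι :=
  open Classical in Finset.univ.filter fun i => mink (D.e i) x = 0

@[simp] lemma mem_tight : i ∈ D.tight x ↔ mink (D.e i) x = 0 := by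
  simp [tight]

lemma eq_of_tight_subset (hv : v ∈ D.verts) (hw : w ∈ D.verts) (h : D.tight v ⊆ D.tight w) :
    w = v := by
  have hwv := eq_smul_of_tight hv (y := w) fun i hi => mem_tight.1 (h (mem_tight.2 hi))
  rwa [apply_zero_of_mem_verts hw, one_smul] at hwv

lemma mink_neg_of_notMem_tight (hv : v ∈ D.cone) (hi : i ∉ D.tight v) : mink (D.e i) v < 0 :=
  (hv i).lt_of_ne fun h => hi (mem_tight.2 h)

variable (D) in
/-- The walls orthogonal to all walls in `S`; those outside a face that carry facets of it when
`S` is a clique. -/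
def link (S : Finset ι) : Finset ι :=
  open Classical in Finset.univ.filter fun k => ∀ s ∈ S, mink (D.e k) (D.e s) = 0

variable {M : Finset ι} {k s t : ι}

@[simp] lemma mem_link : k ∈ D.link S ↔ ∀ s ∈ S, mink (D.e k) (D.e s) = 0 := by
  simp [link]

lemma notMem_of_mem_link (hk : k ∈ D.link S) : k ∉ S := fun h =>
  one_ne_zero ((D.unit k).symm.trans (mem_link.1 hk k h))

lemma IsClique.mem_link (hM : D.IsClique M) (hSM : S ⊆ M) (hk : k ∈ M) (hkS : k ∉ S) :
    k ∈ D.link S :=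
  RightAngledCone.mem_link.2 fun s hs => hM k hk s (hSM hs) fun h => hkS (h ▸ hs)

lemma IsClique.insert [DecidableEq ι] (hS : D.IsClique S) (hk : k ∈ D.link S) :
    D.IsClique (insert k S) := by
  intro i hi j hj hij
  rcases Finset.mem_insert.1 hi with rfl | hiS <;> rcases Finset.mem_insert.1 hj with rfl | hjS
  · exact absurd rfl hij
  · exact RightAngledCone.mem_link.1 hk j hjS
  · exact mink_comm (D.e i) _ ▸ RightAngledCone.mem_link.1 hk i hiS
  · exact hS i hiS j hjS hij

lemma mink_of_mem_tight (ht : t ∈ D.tight v) : mink v (D.e t) = 0 := by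
  rw [mink_comm, mem_tight.1 ht]

omit [Fintype ι] in
lemma mink_add_wall_self_nonpos (hij : i ≠ j) (h : mink (D.e i) (D.e j) ≠ 0) :
    mink (D.e i + D.e j) (D.e i + D.e j) ≤ 0 := by
  have := (D.gram i j hij).resolve_left h
  simp only [mink_add_left, mink_add_right, D.unit, mink_comm (D.e j)]
  linarith

variable (D) in
/-- A vertex in the interior of the light cone. -/
structure IsFiniteVert (v : Fin (n + 1) → ℝ) : Prop where
  mem : v ∈ D.verts
  timelike : mink v v < 0

variable (D) in
/-- A vertex on the boundary of the light cone. -/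
structure IsIdealVert (v : Fin (n + 1) → ℝ) : Prop where
  mem : v ∈ D.verts
  null : mink v v = 0

omit [Fintype ι] in
lemma isFiniteVert_or_isIdealVert (hv : v ∈ D.verts) : D.IsFiniteVert v ∨ D.IsIdealVert v :=
  (mink_self_nonpos_of_mem_verts hv).lt_or_eq.imp (fun h => ⟨hv, h⟩) fun h => ⟨hv, h⟩

namespace IsFiniteVert

lemma isClique_tight (hv : D.IsFiniteVert v) : D.IsClique (D.tight v) := by
  intro i hi j hj hij
  by_contra h
  have hzero : D.e i + D.e j = 0 := by
    refine eq_zero_of_mink_eq_zero hv.timelike (apply_zero_pos_of_mem_verts hv.mem) ?_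
      (mink_add_wall_self_nonpos hij h)
    rw [mink_comm, mink_add_left, mem_tight.1 hi, mem_tight.1 hj, add_zero]
  have hpt : mink (D.e i) D.pt + mink (D.e j) D.pt = 0 := by
    rw [← mink_add_left, hzero, mink_comm, mink_zero_right]
  linarith [D.pt_neg i, D.pt_neg j]

lemma exists_decomposition (hv : D.IsFiniteVert v) (x : Fin (n + 1) → ℝ) :
    ∃ a : ℝ, x = a • v + ∑ t ∈ D.tight v, mink (D.e t) x • D.e t := by
  refine ⟨_, eq_add_of_sub_eq (eq_smul_of_tight hv.mem fun i hi => ?_)⟩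
  rw [mink_sub_right, hv.isClique_tight.mink_sum (mem_tight.2 hi) fun t => mink (D.e t) x,
    sub_self]

lemma card_tight (hv : D.IsFiniteVert v) : (D.tight v).card = n := by
  classical
  have h := card_add_one_eq_finrank (κ := D.tight v) (ne_zero_of_mem_verts hv.mem)
    (fun t => minkForm n (D.e t)) (fun t => D.e t) (fun t => mem_tight.1 t.2)
    (fun s t => ?_) fun x => ?_
  · simpa only [Fintype.card_coe, Module.finrank_fin_fun, add_left_inj] using h
  · split_ifs with hst
    · rw [hst]
      exact D.unit t
    · exact hv.isClique_tight s s.2 t t.2 fun h => hst (Subtype.ext h)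
  · simpa only [minkForm_apply, ← Finset.sum_coe_sort (D.tight v)] using hv.exists_decomposition x

end IsFiniteVert

variable (D) in
/-- The wall through the ideal vertex `v` that is parallel to `t`, that is, meets it only at `v`.
For `t` not through `v`, or `v` not ideal, the value is irrelevant. -/
def opp (v : Fin (n + 1) → ℝ) (t : ι) : ι :=
  open Classical in
  if h : ∃ j ∈ D.tight v, t ≠ j ∧ mink (D.e t) (D.e j) ≠ 0 then h.choose else t

namespace IsIdealVert

lemma exists_add_eq_smul (hv : D.IsIdealVert v) (hi : i ∈ D.tight v) (hj : j ∈ D.tight v)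
    (hij : i ≠ j) (h : mink (D.e i) (D.e j) ≠ 0) : ∃ c : ℝ, 0 < c ∧ D.e i + D.e j = c • v := by
  have hsum := eq_smul_of_mink_eq_zero hv.null.le (apply_zero_pos_of_mem_verts hv.mem)
    (by rw [mink_comm, mink_add_left, mem_tight.1 hi, mem_tight.1 hj, add_zero])
    (mink_add_wall_self_nonpos hij h)
  set c := (D.e i + D.e j) 0 / v 0
  have hpt : mink (D.e i) D.pt + mink (D.e j) D.pt = c * mink v D.pt := by
    rw [← mink_add_left, hsum, mink_smul_left]
  have hvpt := mink_pt_neg (mem_cone_of_mem_verts hv.mem) (ne_zero_of_mem_verts hv.mem)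
  refine ⟨c, pos_of_mul_neg_left ?_ hvpt.le, hsum⟩
  linarith [D.pt_neg i, D.pt_neg j]

/-- Otherwise one could cross the wall `t` at `v` and stay in the cone, leaving the light cone. -/
lemma exists_mink_ne_zero (hv : D.IsIdealVert v) (ht : t ∈ D.tight v) :
    ∃ j ∈ D.tight v, t ≠ j ∧ mink (D.e t) (D.e j) ≠ 0 := by
  by_contra! horth
  obtain ⟨ε, hε, h⟩ := exists_pos_forall_add_mul_neg (fun i => mink (D.e i) v)
    (fun i => mink (D.e i) (D.e t))
  have hmem : v - ε • D.e t ∈ D.cone := by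
    intro i
    rw [mink_sub_right, mink_smul_right]
    by_cases hi : i ∈ D.tight v
    · rcases eq_or_ne t i with rfl | hti
      · rw [mem_tight.1 hi, D.unit]
        linarith
      · rw [mem_tight.1 hi, mink_comm, horth i hi hti]
        simp
    · exact (h i (mink_neg_of_notMem_tight (mem_cone_of_mem_verts hv.mem) hi)).2.le
  have hcausal := (D.causal _ hmem).1
  simp only [mink_sub_left, mink_sub_right, mink_smul_left, mink_smul_right, D.unit, hv.null,
    mink_of_mem_tight ht, mem_tight.1 ht] at hcausal
  nlinarith

lemma opp_spec (hv : D.IsIdealVert v) (ht : t ∈ D.tight v) :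
    D.opp v t ∈ D.tight v ∧ t ≠ D.opp v t ∧ mink (D.e t) (D.e (D.opp v t)) ≠ 0 := by
  have h := hv.exists_mink_ne_zero ht
  rw [opp, dif_pos h]
  exact h.choose_spec

lemma opp_mem (hv : D.IsIdealVert v) (ht : t ∈ D.tight v) : D.opp v t ∈ D.tight v :=
  (hv.opp_spec ht).1

lemma mink_opp_ne_zero (hv : D.IsIdealVert v) (ht : t ∈ D.tight v) :
    mink (D.e t) (D.e (D.opp v t)) ≠ 0 :=
  (hv.opp_spec ht).2.2

lemma exists_add_opp (hv : D.IsIdealVert v) (ht : t ∈ D.tight v) :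
    ∃ c : ℝ, 0 < c ∧ D.e t + D.e (D.opp v t) = c • v := by
  obtain ⟨ho, hto, hoo⟩ := hv.opp_spec ht
  exact hv.exists_add_eq_smul ht ho hto hoo

/-- Both `e j` and `e (opp v t)` lie on the line `-e t + ℝ v`, so their product would be `1`. -/
lemma eq_opp (hv : D.IsIdealVert v) (ht : t ∈ D.tight v) (hj : j ∈ D.tight v) (hne : j ≠ t)
    (h : mink (D.e t) (D.e j) ≠ 0) : j = D.opp v t := by
  obtain ⟨c, -, hc⟩ := hv.exists_add_eq_smul ht hj hne.symm h
  obtain ⟨d, -, hd⟩ := hv.exists_add_opp ht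
  by_contra hjo
  have hone : mink (D.e j) (D.e (D.opp v t)) = 1 := by
    rw [eq_sub_of_add_eq' hc, eq_sub_of_add_eq' hd]
    simp [D.unit, hv.null, mem_tight.1 ht, mink_of_mem_tight ht]
  linarith [D.gram_nonpos hjo]

lemma mink_eq_zero (hv : D.IsIdealVert v) (hs : s ∈ D.tight v) (ht : t ∈ D.tight v)
    (hst : s ≠ t) (hopp : s ≠ D.opp v t) : mink (D.e s) (D.e t) = 0 := by
  rw [mink_comm]
  exact by_contra fun h => hopp (hv.eq_opp ht hs hst h)

lemma opp_opp (hv : D.IsIdealVert v) (ht : t ∈ D.tight v) : D.opp v (D.opp v t) = t := by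
  obtain ⟨ho, hto, hoo⟩ := hv.opp_spec ht
  exact (hv.eq_opp ho ht hto (mink_comm (D.e t) _ ▸ hoo)).symm

lemma opp_injOn (hv : D.IsIdealVert v) : Set.InjOn (D.opp v) (D.tight v) :=
  fun s hs t ht h => by rw [← hv.opp_opp hs, h, hv.opp_opp ht]

lemma mink_opp (hv : D.IsIdealVert v) (ht : t ∈ D.tight v) :
    mink (D.e t) (D.e (D.opp v t)) = -1 := by
  obtain ⟨c, -, hc⟩ := hv.exists_add_opp ht
  have hnull : mink (D.e t + D.e (D.opp v t)) (D.e t + D.e (D.opp v t)) = 0 := by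
    rw [hc, mink_smul_left, mink_smul_right, hv.null, mul_zero, mul_zero]
  rw [mink_add_left, mink_add_right, mink_add_right, D.unit, D.unit,
    mink_comm (D.e (D.opp v t))] at hnull
  linarith

lemma opp_mem_link (hv : D.IsIdealVert v) (hSv : S ⊆ D.tight v) (ht : t ∈ D.tight v)
    (htS : t ∈ D.link S) : D.opp v t ∈ D.link S := by
  refine mem_link.2 fun s hs =>
    hv.mink_eq_zero (hv.opp_mem ht) (hSv hs) (fun h => ?_) fun h => ?_
  · exact hv.mink_opp_ne_zero ht (h ▸ mem_link.1 htS s hs)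
  · exact notMem_of_mem_link htS (hv.opp_injOn ht (hSv hs) h ▸ hs)

lemma eq_of_opp_eq (hv : D.IsIdealVert v) (hw : D.IsIdealVert w) (htv : t ∈ D.tight v)
    (htw : t ∈ D.tight w) (h : D.opp v t = D.opp w t) : v = w := by
  obtain ⟨c, hc, hcv⟩ := hv.exists_add_opp htv
  obtain ⟨d, -, hdw⟩ := hw.exists_add_opp htw
  have heq : c • v = d • w := by rw [← hcv, ← hdw, h]
  have hcd : c = d := by
    simpa [apply_zero_of_mem_verts hv.mem, apply_zero_of_mem_verts hw.mem] using congrFun heq 0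
  rw [← hcd] at heq
  exact smul_right_injective _ hc.ne' heq

omit [Fintype ι] in
lemma mink_nonpos [Finite ι] (hv : D.IsIdealVert v) (hx : x ∈ D.cone) : mink v x ≤ 0 := by
  cases nonempty_fintype ι
  obtain ⟨t, ht⟩ : (D.tight v).Nonempty := by
    by_contra hne
    have hpt := eq_smul_of_tight hv.mem (y := D.pt) fun i hi => absurd ⟨i, mem_tight.2 hi⟩ hne
    have htimelike := D.pt_timelike
    rw [hpt, mink_smul_left, mink_smul_right, hv.null] at htimelike
    simp at htimelike
  obtain ⟨c, hc, hadd⟩ := hv.exists_add_opp ht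
  have hcx : c * mink v x ≤ 0 := by
    rw [← mink_smul_left, ← hadd, mink_add_left]
    linarith [hx t, hx (D.opp v t)]
  exact nonpos_of_mul_nonpos_right hcx hc

end IsIdealVert

variable (D) in
/-- A clique `M` consisting of one wall out of each pair of parallel walls through the ideal vertex
`v`. It cuts out an edge ending at `v`. -/
structure IsTransversal (v : Fin (n + 1) → ℝ) (M : Finset ι) : Prop where
  vert : D.IsIdealVert v
  clique : D.IsClique M
  subset : M ⊆ D.tight v
  mem_or_opp_mem : ∀ t ∈ D.tight v, t ∈ M ∨ D.opp v t ∈ M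

lemma IsIdealVert.exists_transversal (hv : D.IsIdealVert v) (hS : D.IsClique S)
    (hSv : S ⊆ D.tight v) (q : ι → Prop) (hq : ∀ t ∈ D.tight v, q t ∨ q (D.opp v t)) :
    ∃ M, D.IsTransversal v M ∧ S ⊆ M ∧ ∀ t ∈ M, t ∉ S → q t := by
  classical
  obtain ⟨M, hM, hmax⟩ := (Finset.univ.filter fun M : Finset ι =>
    D.IsClique M ∧ S ⊆ M ∧ M ⊆ D.tight v ∧ ∀ t ∈ M, t ∉ S → q t).exists_max_image Finset.card
      ⟨S, by simpa using ⟨hS, hSv, fun t ht ht' => absurd ht ht'⟩⟩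
  simp only [Finset.mem_filter, Finset.mem_univ, true_and] at hM hmax
  obtain ⟨hclique, hSM, hMv, hMq⟩ := hM
  have hcover : ∀ t ∈ D.tight v, q t → t ∈ M ∨ D.opp v t ∈ M := by
    intro t ht hqt
    by_contra! hnot
    have hlink : t ∈ D.link M := mem_link.2 fun s hs =>
      hv.mink_eq_zero ht (hMv hs) (fun h => hnot.1 (h ▸ hs)) fun h =>
        hnot.2 (by rwa [h, hv.opp_opp (hMv hs)])
    have hcard := hmax (insert t M) ⟨hclique.insert hlink, hSM.trans (Finset.subset_insert _ _),
      Finset.insert_subset ht hMv,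
      Finset.forall_mem_insert _ _ _ |>.2 ⟨fun _ => hqt, hMq⟩⟩
    rw [Finset.card_insert_of_notMem hnot.1] at hcard
    omega
  refine ⟨M, ⟨hv, hclique, hMv, fun t ht => ?_⟩, hSM, hMq⟩
  rcases hq t ht with h | h
  · exact hcover t ht h
  · simpa [hv.opp_opp ht, or_comm] using hcover _ (hv.opp_mem ht) h

namespace IsTransversal

lemma eq_smul (hM : D.IsTransversal v M) (hy : ∀ t ∈ M, mink (D.e t) y = 0)
    (hvy : mink v y = 0) : y = y 0 • v := by
  refine eq_smul_of_tight hM.vert.mem fun i hi => ?_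
  have hi' := mem_tight.2 hi
  rcases hM.mem_or_opp_mem i hi' with h | h
  · exact hy i h
  · obtain ⟨c, -, hc⟩ := hM.vert.exists_add_opp hi'
    simp [eq_sub_of_add_eq hc, hvy, hy _ h]

lemma mink_sum (hM : D.IsTransversal v M) (c : ι → ℝ) : mink v (∑ t ∈ M, c t • D.e t) = 0 := by
  rw [mink_sum_right]
  exact Finset.sum_eq_zero fun t ht => by
    rw [mink_smul_right, mink_of_mem_tight (hM.subset ht), mul_zero]

lemma exists_decomposition (hM : D.IsTransversal v M) (x : Fin (n + 1) → ℝ) :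
    ∃ a : ℝ, x = a • v + (mink v x / mink v (D.proj M)) • D.proj M
      + ∑ t ∈ M, mink (D.e t) x • D.e t := by
  set b := mink v x / mink v (D.proj M) with hb
  have hvy : mink v (x - b • D.proj M - ∑ t ∈ M, mink (D.e t) x • D.e t) = 0 := by
    rw [mink_sub_right, mink_sub_right, mink_smul_right, hM.mink_sum fun t => mink (D.e t) x, hb,
      div_mul_cancel₀ _ (hM.clique.mink_vert_proj_neg hM.vert.mem).ne]
    ring
  have hy := hM.eq_smul (fun t ht => by
    rw [mink_sub_right, mink_sub_right, mink_smul_right, hM.clique.mink_proj_eq_zero ht,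
      hM.clique.mink_sum ht fun t => mink (D.e t) x]
    ring) hvy
  exact ⟨_, by rw [← hy]; abel⟩

lemma card_add_one (hM : D.IsTransversal v M) : M.card + 1 = n := by
  classical
  have hb := (hM.clique.mink_vert_proj_neg hM.vert.mem).ne
  have h := card_add_one_eq_finrank (κ := Option M) (ne_zero_of_mem_verts hM.vert.mem)
    (fun t => minkForm n (t.elim v fun t => D.e t))
    (fun t => t.elim ((mink v (D.proj M))⁻¹ • D.proj M) fun t => D.e t) ?_ ?_ fun x => ?_
  · simpa using h
  · rintro (_ | t)
    · exact hM.vert.null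
    · exact mem_tight.1 (hM.subset t.2)
  · rintro (_ | s) (_ | t)
    · simp [hb]
    · simpa using mink_of_mem_tight (hM.subset t.2)
    · simp [hM.clique.mink_proj_eq_zero s.2]
    · rcases eq_or_ne s t with rfl | hst
      · simpa using D.unit s
      · simpa [hst] using hM.clique s s.2 t t.2 fun h => hst (Subtype.ext h)
  · obtain ⟨a, ha⟩ := hM.exists_decomposition x
    refine ⟨a, ha.trans ?_⟩
    rw [Fintype.sum_option, ← Finset.sum_coe_sort M]
    simp [smul_smul, div_eq_mul_inv, add_assoc]

end IsTransversal

section Functionals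

variable {l : (Fin (n + 1) → ℝ) →ₗ[ℝ] ℝ}

/-- The homogeneous form of `x ↦ l x - l v` on the slice at height one: the linear functional that
agrees there with `l` up to a constant and vanishes at `v`. -/
def excess (l : (Fin (n + 1) → ℝ) →ₗ[ℝ] ℝ) (v : Fin (n + 1) → ℝ) :
    (Fin (n + 1) → ℝ) →ₗ[ℝ] ℝ :=
  l - l v • LinearMap.proj 0

lemma excess_apply (l : (Fin (n + 1) → ℝ) →ₗ[ℝ] ℝ) (v x : Fin (n + 1) → ℝ) :
    excess l v x = l x - x 0 * l v := by
  simp [excess, mul_comm]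

lemma excess_neg (l : (Fin (n + 1) → ℝ) →ₗ[ℝ] ℝ) (v x : Fin (n + 1) → ℝ) :
    excess (-l) v x = -excess l v x := by
  simp only [excess_apply, LinearMap.neg_apply]
  ring

omit [Fintype ι] in
lemma excess_self (l : (Fin (n + 1) → ℝ) →ₗ[ℝ] ℝ) (hv : v ∈ D.verts) : excess l v v = 0 := by
  rw [excess_apply, apply_zero_of_mem_verts hv, one_mul, sub_self]

variable (D) in
/-- A functional separating the vertices from each other and from the edges through them. -/
structure IsGeneric (l : (Fin (n + 1) → ℝ) →ₗ[ℝ] ℝ) : Prop where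
  injOn : Set.InjOn l D.verts
  excess_ne_zero : ∀ v ∈ D.verts, ∀ E, D.IsClique E → E.card + 1 = n →
    excess l v (D.proj E) ≠ 0

omit [Fintype ι] in
lemma IsGeneric.neg (hl : D.IsGeneric l) : D.IsGeneric (-l) where
  injOn _ hv _ hw hvw := hl.injOn hv hw (neg_injective hvw)
  excess_ne_zero v hv E hE hc := by
    rw [excess_neg]
    exact neg_ne_zero.2 (hl.excess_ne_zero v hv E hE hc)

lemma IsClique.tight_proj (hS : D.IsClique S) : D.tight (D.proj S) = S := by
  ext i
  rw [mem_tight]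
  exact ⟨fun h => by_contra fun hi => (mink_proj_neg hi).ne h, hS.mink_proj_eq_zero⟩

omit [Fintype ι] in
/-- A vertex in the relative interior of an edge would be finite, but it lies on too few walls. -/
lemma IsClique.proj_ne_smul_vert [Finite ι] (hS : D.IsClique S) (hc : S.card + 1 = n)
    (hv : v ∈ D.verts) (c : ℝ) : D.proj S ≠ c • v := by
  cases nonempty_fintype ι
  intro h
  have hc0 : c ≠ 0 := by
    rintro rfl
    exact hS.proj_ne_zero (by simpa using h)
  have htight : D.tight v = S := by
    rw [← hS.tight_proj]
    ext i
    simp [h, hc0]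
  have hfin : D.IsFiniteVert v := by
    refine ⟨hv, (mink_self_nonpos_of_mem_verts hv).lt_of_ne fun hnull => ?_⟩
    have := hS.proj_timelike
    simp [h, hnull] at this
  have := htight ▸ hfin.card_tight
  omega

omit [Fintype ι] in
variable (D) in
lemma exists_isGeneric [Finite ι] : ∃ l, D.IsGeneric l := by
  have hZ := (D.finite_verts.image2 (· - ·) D.finite_verts).union
    (D.finite_verts.image2 (fun v E => D.proj E - D.proj E 0 • v) (Set.finite_univ (α := Finset ι)))
  obtain ⟨l, hl⟩ := exists_dual_apply_ne_zero_of_finite hZ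
  refine ⟨l, fun v hv w hw hvw => ?_, fun v hv E hE hc => ?_⟩
  · by_contra hne
    refine hl (v - w) (Or.inl ⟨v, hv, w, hw, rfl⟩) (sub_ne_zero.2 hne) ?_
    rw [map_sub, hvw, sub_self]
  · have h := hl _ (Or.inr ⟨v, hv, E, trivial, rfl⟩)
      (sub_ne_zero.2 (hE.proj_ne_smul_vert hc hv _))
    rwa [map_sub, map_smul, smul_eq_mul, ← excess_apply] at h

end Functionals

variable (D) in
/-- The vertices on the face of a clique. -/
def vertsOn (S : Finset ι) : Finset (Fin (n + 1) → ℝ) :=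
  open Classical in D.finite_verts.toFinset.filter fun v => S ⊆ D.tight v

variable (D) in
/-- The ideal vertices on the face of a clique. -/
def idealOn (S : Finset ι) : Finset (Fin (n + 1) → ℝ) :=
  open Classical in (D.vertsOn S).filter D.IsIdealVert

@[simp] lemma mem_vertsOn : v ∈ D.vertsOn S ↔ v ∈ D.verts ∧ S ⊆ D.tight v := by
  simp [vertsOn]

lemma mem_idealOn : v ∈ D.idealOn S ↔ D.IsIdealVert v ∧ S ⊆ D.tight v := by
  simp only [idealOn, Finset.mem_filter, mem_vertsOn]
  exact ⟨fun h => ⟨h.2, h.1.2⟩, fun h => ⟨⟨h.1.mem, h.2⟩, h.1⟩⟩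

lemma mem_faceCone_of_mem_vertsOn (hv : v ∈ D.vertsOn S) : v ∈ D.faceCone S :=
  ⟨mem_cone_of_mem_verts (mem_vertsOn.1 hv).1, fun _ hs => mem_tight.1 ((mem_vertsOn.1 hv).2 hs)⟩

section Top

variable {l : (Fin (n + 1) → ℝ) →ₗ[ℝ] ℝ}

variable (D) in
/-- The vertex `v` maximizes the functional `l` on the face of `S`. -/
def IsTop (l : (Fin (n + 1) → ℝ) →ₗ[ℝ] ℝ) (S : Finset ι) (v : Fin (n + 1) → ℝ) : Prop :=
  v ∈ D.vertsOn S ∧ ∀ x ∈ D.faceCone S, excess l v x ≤ 0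

lemma IsClique.exists_isTop (hS : D.IsClique S) (l : (Fin (n + 1) → ℝ) →ₗ[ℝ] ℝ) :
    ∃ v, D.IsTop l S v := by
  obtain ⟨v, hv, hvS, hmax⟩ := hS.exists_vert_max l
  refine ⟨v, mem_vertsOn.2 ⟨hv, fun s hs => mem_tight.2 (hvS.2 s hs)⟩, fun x hx => ?_⟩
  rw [excess_apply]
  linarith [hmax x hx]

lemma IsTop.unique (hl : D.IsGeneric l) (hv : D.IsTop l S v) (hw : D.IsTop l S w) : v = w := by
  have hv' := (mem_vertsOn.1 hv.1).1
  have hw' := (mem_vertsOn.1 hw.1).1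
  have hwv := hv.2 w (mem_faceCone_of_mem_vertsOn hw.1)
  have hvw := hw.2 v (mem_faceCone_of_mem_vertsOn hv.1)
  rw [excess_apply, apply_zero_of_mem_verts hw'] at hwv
  rw [excess_apply, apply_zero_of_mem_verts hv'] at hvw
  exact hl.injOn hv' hw' (by linarith)

namespace IsFiniteVert

lemma excess_eq_sum (hv : D.IsFiniteVert v) (l : (Fin (n + 1) → ℝ) →ₗ[ℝ] ℝ)
    (x : Fin (n + 1) → ℝ) :
    excess l v x = ∑ t ∈ D.tight v, mink (D.e t) x * excess l v (D.e t) := by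
  obtain ⟨a, ha⟩ := hv.exists_decomposition x
  conv_lhs => rw [ha]
  simp [excess_self l hv.mem]

lemma excess_proj_erase [DecidableEq ι] (hv : D.IsFiniteVert v)
    (l : (Fin (n + 1) → ℝ) →ₗ[ℝ] ℝ) (ht : t ∈ D.tight v) :
    excess l v (D.proj ((D.tight v).erase t)) =
      mink (D.e t) (D.proj ((D.tight v).erase t)) * excess l v (D.e t) := by
  rw [hv.excess_eq_sum l, Finset.sum_eq_single_of_mem t ht]
  intro s hs hst
  rw [(hv.isClique_tight.subset (Finset.erase_subset _ _)).mink_proj_eq_zero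
    (Finset.mem_erase.2 ⟨hst, hs⟩), zero_mul]

lemma excess_wall_ne_zero (hv : D.IsFiniteVert v) (hl : D.IsGeneric l) (ht : t ∈ D.tight v) :
    excess l v (D.e t) ≠ 0 := by
  classical
  intro h
  refine hl.excess_ne_zero v hv.mem ((D.tight v).erase t)
    (hv.isClique_tight.subset (Finset.erase_subset _ _)) ?_ ?_
  · rw [Finset.card_erase_add_one ht, hv.card_tight]
  · rw [hv.excess_proj_erase l ht, h, mul_zero]

lemma isTop_iff (hv : D.IsFiniteVert v) (hR : R ⊆ D.tight v) :
    D.IsTop l R v ↔ ∀ t ∈ D.tight v, t ∉ R → 0 ≤ excess l v (D.e t) := by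
  classical
  constructor
  · intro h t ht htR
    have hR' : R ⊆ (D.tight v).erase t := Finset.subset_erase.2 ⟨hR, htR⟩
    have hle := h.2 _ (faceCone_anti hR'
      (hv.isClique_tight.subset (Finset.erase_subset t _)).proj_mem_faceCone)
    rw [hv.excess_proj_erase l ht] at hle
    exact nonneg_of_mul_nonpos_right hle (mink_proj_neg (Finset.notMem_erase t _))
  · refine fun h => ⟨mem_vertsOn.2 ⟨hv.mem, hR⟩, fun x hx => ?_⟩
    rw [hv.excess_eq_sum l]
    refine Finset.sum_nonpos fun t ht => ?_
    by_cases htR : t ∈ R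
    · rw [hx.2 t htR, zero_mul]
    · exact mul_nonpos_of_nonpos_of_nonneg (hx.1 t) (h t ht htR)

/-- The witness consists of the walls `t` with `0 < excess l v (e t)`: the edge leaving the wall
`t` goes down. -/
lemma exists_forall_isTop_iff [DecidableEq ι] (hv : D.IsFiniteVert v) (hl : D.IsGeneric l) :
    ∃ U : Finset ι, ∀ R ⊆ D.tight v,
      (D.IsTop l R v ↔ D.tight v \ R ⊆ U) ∧
        (D.IsTop (-l) R v ↔ Disjoint (D.tight v \ R) U) := by
  refine ⟨(D.tight v).filter fun t => 0 < excess l v (D.e t), fun R hR => ⟨?_, ?_⟩⟩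
  · rw [hv.isTop_iff hR, Finset.subset_iff]
    refine forall_congr' fun t => ?_
    simp only [Finset.mem_sdiff, Finset.mem_filter]
    exact ⟨fun h ht => ⟨ht.1, (h ht.1 ht.2).lt_of_ne' (hv.excess_wall_ne_zero hl ht.1)⟩,
      fun h ht htR => (h ⟨ht, htR⟩).2.le⟩
  · rw [hv.isTop_iff hR, Finset.disjoint_left]
    refine forall_congr' fun t => ?_
    simp only [Finset.mem_sdiff, Finset.mem_filter, excess_neg, not_and, not_lt,
      Left.nonneg_neg_iff]
    tauto

end IsFiniteVert

end Top

lemma IsIdealVert.isClique_iff (hv : D.IsIdealVert v) (hR : R ⊆ D.tight v) :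
    D.IsClique R ↔ ∀ t ∈ R, D.opp v t ∉ R := by
  refine ⟨fun h t ht ho => ?_, fun h i hi j hj hij => ?_⟩
  · exact hv.mink_opp_ne_zero (hR ht) (h t ht _ ho (hv.opp_spec (hR ht)).2.1)
  · exact hv.mink_eq_zero (hR hi) (hR hj) hij fun hij' => h j hj (hij' ▸ hi)

lemma IsTransversal.opp_notMem (hM : D.IsTransversal v M) (ht : t ∈ M) : D.opp v t ∉ M :=
  (hM.vert.isClique_iff hM.subset).1 hM.clique t ht

section Frame

variable [DecidableEq ι] {H A B C : Finset ι}

variable (D) in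
/-- The set `H` of walls extends `S` to a transversal of the ideal vertex `v`. The link of `v` in
the face of `S` is then a cube with the pairs of opposite facets `t`, `opp v t` for `t ∈ H`. -/
structure IsFrame (v : Fin (n + 1) → ℝ) (S H : Finset ι) : Prop where
  disjoint : Disjoint S H
  transversal : D.IsTransversal v (S ∪ H)

variable (D) in
/-- The walls in `S`, those in `A`, and those parallel at `v` to the walls in `B`. If `H` is a frame
and `A`, `B` are disjoint subsets of `H`, this is a face of the cube described by `H`. -/
def cubeFace (v : Fin (n + 1) → ℝ) (S A B : Finset ι) : Finset ι :=
  S ∪ (A ∪ B.image (D.opp v))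

lemma mem_cubeFace : i ∈ D.cubeFace v S A B ↔ i ∈ S ∨ i ∈ A ∨ ∃ j ∈ B, D.opp v j = i := by
  simp [cubeFace]

lemma cubeFace_subset {A' B' : Finset ι} (hA : A ⊆ A') (hB : B ⊆ B') :
    D.cubeFace v S A B ⊆ D.cubeFace v S A' B' :=
  Finset.union_subset_union_right (Finset.union_subset_union hA (Finset.image_subset_image hB))

lemma subset_cubeFace : S ⊆ D.cubeFace v S A B :=
  Finset.subset_union_left

lemma IsIdealVert.exists_isFrame (hv : D.IsIdealVert v) (hS : D.IsClique S)
    (hSv : S ⊆ D.tight v) (q : ι → Prop) (hq : ∀ t ∈ D.tight v, q t ∨ q (D.opp v t)) :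
    ∃ H, D.IsFrame v S H ∧ ∀ t ∈ H, q t := by
  obtain ⟨M, hM, hSM, hMq⟩ := hv.exists_transversal hS hSv q hq
  refine ⟨M \ S, ⟨Finset.disjoint_sdiff, ?_⟩, fun t ht => ?_⟩
  · rwa [Finset.union_sdiff_of_subset hSM]
  · exact hMq t (Finset.mem_sdiff.1 ht).1 (Finset.mem_sdiff.1 ht).2

namespace IsFrame

lemma vert (F : D.IsFrame v S H) : D.IsIdealVert v := F.transversal.vert

lemma face_subset (F : D.IsFrame v S H) : S ⊆ D.tight v :=
  Finset.subset_union_left.trans F.transversal.subset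

lemma subset (F : D.IsFrame v S H) : H ⊆ D.tight v :=
  Finset.subset_union_right.trans F.transversal.subset

lemma notMem_face (F : D.IsFrame v S H) (ht : t ∈ H) : t ∉ S :=
  Finset.disjoint_right.1 F.disjoint ht

lemma opp_mem_tight (F : D.IsFrame v S H) (ht : t ∈ H) : D.opp v t ∈ D.tight v :=
  F.vert.opp_mem (F.subset ht)

lemma opp_notMem (F : D.IsFrame v S H) (ht : t ∈ S ∪ H) : D.opp v t ∉ S ∧ D.opp v t ∉ H := by
  simpa [not_or] using F.transversal.opp_notMem ht

lemma opp_injOn (F : D.IsFrame v S H) : Set.InjOn (D.opp v) H := F.vert.opp_injOn.mono F.subset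

lemma mem_link (F : D.IsFrame v S H) (ht : t ∈ H) : t ∈ D.link S :=
  F.transversal.clique.mem_link Finset.subset_union_left (Finset.mem_union_right _ ht)
    (F.notMem_face ht)

lemma opp_mem_link (F : D.IsFrame v S H) (ht : t ∈ H) : D.opp v t ∈ D.link S :=
  F.vert.opp_mem_link F.face_subset (F.subset ht) (F.mem_link ht)

lemma mem_or_opp_mem (F : D.IsFrame v S H) (ht : t ∈ D.tight v) (htS : t ∈ D.link S) :
    t ∈ H ∨ D.opp v t ∈ H := by
  have h := F.transversal.mem_or_opp_mem t ht
  simp only [Finset.mem_union] at h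
  refine h.imp (Or.resolve_left · (notMem_of_mem_link htS)) (Or.resolve_left · fun ho => ?_)
  exact F.vert.mink_opp_ne_zero ht (RightAngledCone.mem_link.1 htS _ ho)

lemma cubeFace_subset_tight (F : D.IsFrame v S H) (hA : A ⊆ H) (hB : B ⊆ H) :
    D.cubeFace v S A B ⊆ D.tight v := by
  intro i hi
  rcases mem_cubeFace.1 hi with hiS | hiA | ⟨j, hjB, rfl⟩
  · exact F.face_subset hiS
  · exact F.subset (hA hiA)
  · exact F.opp_mem_tight (hB hjB)

lemma mem_cubeFace_iff (F : D.IsFrame v S H) (hB : B ⊆ H) (hi : i ∈ H) :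
    i ∈ D.cubeFace v S A B ↔ i ∈ A := by
  rw [mem_cubeFace]
  refine ⟨?_, fun h => Or.inr (Or.inl h)⟩
  rintro (hiS | hiA | ⟨j, hjB, rfl⟩)
  · exact absurd hiS (F.notMem_face hi)
  · exact hiA
  · exact absurd hi (F.opp_notMem (Finset.mem_union_right _ (hB hjB))).2

lemma opp_mem_cubeFace_iff (F : D.IsFrame v S H) (hA : A ⊆ H) (hB : B ⊆ H) (hi : i ∈ S ∪ H) :
    D.opp v i ∈ D.cubeFace v S A B ↔ i ∈ B := by
  rw [mem_cubeFace]
  refine ⟨?_, fun h => Or.inr (Or.inr ⟨i, h, rfl⟩)⟩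
  rintro (hoS | hoA | ⟨j, hjB, hj⟩)
  · exact absurd hoS (F.opp_notMem hi).1
  · exact absurd (hA hoA) (F.opp_notMem hi).2
  · exact F.vert.opp_injOn (F.subset (hB hjB)) (F.transversal.subset hi) hj ▸ hjB

lemma cubeFace_inj (F : D.IsFrame v S H) {A' B' : Finset ι} (hA : A ⊆ H) (hB : B ⊆ H)
    (hA' : A' ⊆ H) (hB' : B' ⊆ H) (h : D.cubeFace v S A B = D.cubeFace v S A' B') :
    A = A' ∧ B = B' := by
  constructor <;> ext i
  · by_cases hi : i ∈ H
    · rw [← F.mem_cubeFace_iff hB hi, h, F.mem_cubeFace_iff hB' hi]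
    · exact iff_of_false (fun hiA => hi (hA hiA)) fun hiA => hi (hA' hiA)
  · by_cases hi : i ∈ H
    · have hi' := Finset.mem_union_right S hi
      rw [← F.opp_mem_cubeFace_iff hA hB hi', h, F.opp_mem_cubeFace_iff hA' hB' hi']
    · exact iff_of_false (fun hiB => hi (hB hiB)) fun hiB => hi (hB' hiB)

lemma card_cubeFace (F : D.IsFrame v S H) (hA : A ⊆ H) (hB : B ⊆ H) :
    (D.cubeFace v S A B).card = S.card + (A.card + B.card) := by
  rw [cubeFace, Finset.card_union_of_disjoint, Finset.card_union_of_disjoint,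
    Finset.card_image_of_injOn (F.opp_injOn.mono hB)]
  · simp only [Finset.disjoint_right, Finset.forall_mem_image]
    exact fun j hj hjA => (F.opp_notMem (Finset.mem_union_right _ (hB hj))).2 (hA hjA)
  · simp only [Finset.disjoint_right, Finset.forall_mem_union, Finset.forall_mem_image]
    exact ⟨fun j hj => F.notMem_face (hA hj),
      fun j hj => (F.opp_notMem (Finset.mem_union_right _ (hB hj))).1⟩

lemma isClique_cubeFace (F : D.IsFrame v S H) (hA : A ⊆ H) (hB : B ⊆ H) (hAB : Disjoint A B) :
    D.IsClique (D.cubeFace v S A B) := by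
  refine (F.vert.isClique_iff (F.cubeFace_subset_tight hA hB)).2 fun i hi ho => ?_
  rcases mem_cubeFace.1 hi with hiS | hiA | ⟨j, hjB, rfl⟩
  · rw [F.opp_mem_cubeFace_iff hA hB (Finset.mem_union_left _ hiS)] at ho
    exact F.notMem_face (hB ho) hiS
  · rw [F.opp_mem_cubeFace_iff hA hB (Finset.mem_union_right _ (hA hiA))] at ho
    exact Finset.disjoint_left.1 hAB hiA ho
  · rw [F.vert.opp_opp (F.subset (hB hjB)), F.mem_cubeFace_iff hB (hB hjB)] at ho
    exact Finset.disjoint_left.1 hAB ho hjB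

lemma isTransversal_cubeFace (F : D.IsFrame v S H) (hC : C ⊆ H) :
    D.IsTransversal v (D.cubeFace v S C (H \ C)) where
  vert := F.vert
  clique := F.isClique_cubeFace hC Finset.sdiff_subset Finset.disjoint_sdiff
  subset := F.cubeFace_subset_tight hC Finset.sdiff_subset
  mem_or_opp_mem := by
    have hcover : ∀ s ∈ S ∪ H,
        s ∈ D.cubeFace v S C (H \ C) ∨ D.opp v s ∈ D.cubeFace v S C (H \ C) := by
      intro s hs
      rw [F.opp_mem_cubeFace_iff hC Finset.sdiff_subset hs, mem_cubeFace, Finset.mem_sdiff]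
      rcases Finset.mem_union.1 hs with hS | hH <;> tauto
    intro t ht
    rcases F.transversal.mem_or_opp_mem t ht with h | h
    · exact hcover t h
    · simpa [F.vert.opp_opp ht, or_comm] using hcover _ h

lemma card_add_one (F : D.IsFrame v S H) : S.card + H.card + 1 = n := by
  rw [← Finset.card_union_of_disjoint F.disjoint, F.transversal.card_add_one]

lemma exists_eq_cubeFace (F : D.IsFrame v S H) (hR : D.IsClique R) (hSR : S ⊆ R)
    (hRv : R ⊆ D.tight v) : ∃ A ⊆ H, ∃ B ⊆ H, Disjoint A B ∧ R = D.cubeFace v S A B := by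
  refine ⟨R ∩ H, Finset.inter_subset_right, H.filter fun t => D.opp v t ∈ R,
    Finset.filter_subset _ _, ?_, ?_⟩
  · rw [Finset.disjoint_left]
    exact fun i hi hi' => (F.vert.isClique_iff hRv).1 hR i (Finset.mem_inter.1 hi).1
      (Finset.mem_filter.1 hi').2
  · ext i
    rw [mem_cubeFace]
    constructor
    · intro hi
      by_cases hS : i ∈ S
      · exact Or.inl hS
      rcases F.mem_or_opp_mem (hRv hi) (hR.mem_link hSR hi hS) with h | h
      · exact Or.inr (Or.inl (Finset.mem_inter.2 ⟨hi, h⟩))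
      · have hoo := F.vert.opp_opp (hRv hi)
        exact Or.inr (Or.inr ⟨_, Finset.mem_filter.2 ⟨h, hoo.symm ▸ hi⟩, hoo⟩)
    · rintro (h | h | ⟨j, hj, rfl⟩)
      · exact hSR h
      · exact (Finset.mem_inter.1 h).1
      · exact (Finset.mem_filter.1 hj).2

lemma tight_inter_link (F : D.IsFrame v S H) : D.tight v ∩ D.link S = H ∪ H.image (D.opp v) := by
  ext i
  simp only [Finset.mem_inter, Finset.mem_union, Finset.mem_image]
  constructor
  · rintro ⟨hiv, hiS⟩
    exact (F.mem_or_opp_mem hiv hiS).imp id fun h => ⟨_, h, F.vert.opp_opp hiv⟩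
  · rintro (h | ⟨j, hj, rfl⟩)
    · exact ⟨F.subset h, F.mem_link h⟩
    · exact ⟨F.opp_mem_tight hj, F.opp_mem_link hj⟩

lemma card_tight_inter_link (F : D.IsFrame v S H) :
    (D.tight v ∩ D.link S).card = 2 * H.card := by
  rw [F.tight_inter_link, Finset.card_union_of_disjoint, Finset.card_image_of_injOn F.opp_injOn,
    two_mul]
  simp only [Finset.disjoint_right, Finset.forall_mem_image]
  exact fun j hj => (F.opp_notMem (Finset.mem_union_right _ hj)).2

end IsFrame

end Frame

section Slope

variable {l : (Fin (n + 1) → ℝ) →ₗ[ℝ] ℝ}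

lemma IsIdealVert.excess_opp (hv : D.IsIdealVert v) (l : (Fin (n + 1) → ℝ) →ₗ[ℝ] ℝ)
    (ht : t ∈ D.tight v) : excess l v (D.e (D.opp v t)) = -excess l v (D.e t) := by
  obtain ⟨c, -, hc⟩ := hv.exists_add_opp ht
  rw [eq_sub_of_add_eq' hc, map_sub, map_smul, excess_self l hv.mem, smul_zero, zero_sub]

variable (D) in
/-- The rate at which `l` increases along the edge of the transversal `M`, when leaving the ideal
vertex `v`. -/
def slope (l : (Fin (n + 1) → ℝ) →ₗ[ℝ] ℝ) (v : Fin (n + 1) → ℝ) (M : Finset ι) : ℝ :=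
  excess l v (D.proj M) / -mink v (D.proj M)

omit [Fintype ι] in
lemma slope_neg : D.slope (-l) v M = -D.slope l v M := by
  rw [slope, slope, excess_neg, neg_div]

namespace IsTransversal

lemma excess_eq (hM : D.IsTransversal v M) (l : (Fin (n + 1) → ℝ) →ₗ[ℝ] ℝ)
    (x : Fin (n + 1) → ℝ) : excess l v x =
      -mink v x * D.slope l v M + ∑ t ∈ M, mink (D.e t) x * excess l v (D.e t) := by
  obtain ⟨a, ha⟩ := hM.exists_decomposition x
  have hv := (hM.clique.mink_vert_proj_neg hM.vert.mem).ne
  conv_lhs => rw [ha]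
  simp only [map_add, map_smul, map_sum, smul_eq_mul, excess_self l hM.vert.mem, slope]
  field_simp
  ring

lemma slope_ne_zero (hM : D.IsTransversal v M) (hl : D.IsGeneric l) : D.slope l v M ≠ 0 :=
  div_ne_zero (hl.excess_ne_zero v hM.vert.mem M hM.clique hM.card_add_one)
    (neg_ne_zero.2 (hM.clique.mink_vert_proj_neg hM.vert.mem).ne)

lemma isTop_iff (hM : D.IsTransversal v M) (hl : D.IsGeneric l) (hRM : R ⊆ M)
    (h : ∀ t ∈ M, t ∉ R → 0 ≤ excess l v (D.e t)) : D.IsTop l R v ↔ D.slope l v M < 0 := by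
  constructor
  · intro hR
    have hle := hR.2 _ (faceCone_anti hRM hM.clique.proj_mem_faceCone)
    have hpos := neg_pos.2 (hM.clique.mink_vert_proj_neg hM.vert.mem)
    exact (div_nonpos_of_nonpos_of_nonneg hle hpos.le).lt_of_ne (hM.slope_ne_zero hl)
  · refine fun hneg => ⟨mem_vertsOn.2 ⟨hM.vert.mem, hRM.trans hM.subset⟩, fun x hx => ?_⟩
    rw [hM.excess_eq l]
    refine add_nonpos (mul_nonpos_of_nonneg_of_nonpos (neg_nonneg.2 (hM.vert.mink_nonpos hx.1))
      hneg.le) (Finset.sum_nonpos fun t ht => ?_)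
    by_cases htR : t ∈ R
    · rw [hx.2 t htR, zero_mul]
    · exact mul_nonpos_of_nonpos_of_nonneg (hx.1 t) (h t ht htR)

end IsTransversal

/-- With a frame of walls `t` such that `0 ≤ excess l v (e t)`, the functional `l` is largest on the
cube face of `A` and `B` along the edge of `H \ B`, and smallest along the edge of `A`. -/
lemma IsIdealVert.exists_isFrame_forall_isTop_iff [DecidableEq ι] (hv : D.IsIdealVert v)
    (hl : D.IsGeneric l) (hS : D.IsClique S) (hSv : S ⊆ D.tight v) :
    ∃ (H : Finset ι) (up : Finset ι → Prop), D.IsFrame v S H ∧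
      ∀ A ⊆ H, ∀ B ⊆ H, Disjoint A B →
        (D.IsTop l (D.cubeFace v S A B) v ↔ ¬ up (H \ B)) ∧
        (D.IsTop (-l) (D.cubeFace v S A B) v ↔ up A) := by
  obtain ⟨H, F, hH⟩ := hv.exists_isFrame hS hSv (fun t => 0 ≤ excess l v (D.e t)) fun t ht => by
    rw [hv.excess_opp l ht, neg_nonneg]
    exact le_total _ _
  refine ⟨H, fun C => 0 < D.slope l v (D.cubeFace v S C (H \ C)), F, fun A hA B hB hAB => ⟨?_, ?_⟩⟩
  · have hM := F.isTransversal_cubeFace (C := H \ B) Finset.sdiff_subset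
    have hne := hM.slope_ne_zero hl
    beta_reduce
    rw [Finset.sdiff_sdiff_eq_self hB] at hM hne ⊢
    rw [hM.isTop_iff hl (cubeFace_subset (Finset.subset_sdiff.2 ⟨hA, hAB⟩) subset_rfl), not_lt,
      lt_iff_le_and_ne, and_iff_left hne]
    intro t ht htR
    rw [mem_cubeFace] at ht htR
    rcases ht with htS | htHB | htB
    · exact absurd (Or.inl htS) htR
    · exact hH t (Finset.mem_sdiff.1 htHB).1
    · exact absurd (Or.inr (Or.inr htB)) htR
  · have hM := F.isTransversal_cubeFace hA
    rw [hM.isTop_iff hl.neg (cubeFace_subset subset_rfl (Finset.subset_sdiff.2 ⟨hB, hAB.symm⟩)),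
      slope_neg, neg_lt_zero]
    intro t ht htR
    rw [mem_cubeFace] at ht htR
    obtain ⟨j, hj, rfl⟩ : ∃ j ∈ H \ A, D.opp v j = t := by tauto
    have hjH := (Finset.mem_sdiff.1 hj).1
    rw [excess_neg, hv.excess_opp l (F.subset hjH), neg_neg]
    exact hH j hjH

end Slope

section FaceCounts

variable {l : (Fin (n + 1) → ℝ) →ₗ[ℝ] ℝ} {m d : ℕ}

variable (D) in
/-- The number of times (zero, one or two) that `v` is the top or the bottom of the face of `R`
with respect to `l`. -/
def extremeCount (l : (Fin (n + 1) → ℝ) →ₗ[ℝ] ℝ) (R : Finset ι) (v : Fin (n + 1) → ℝ) : ℤ :=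
  open Classical in (if D.IsTop l R v then 1 else 0) + (if D.IsTop (-l) R v then 1 else 0)

variable (D) in
/-- The cliques obtained from `S` by adding `m` walls: the faces of codimension `m` in the face of
`S`. -/
def facesAbove (S : Finset ι) (m : ℕ) : Finset (Finset ι) :=
  open Classical in Finset.univ.filter fun R => D.IsClique R ∧ S ⊆ R ∧ R.card = S.card + m

variable (D) in
/-- The faces of codimension `m` in the face of `S` that contain the point `v`. -/
def facesAt (v : Fin (n + 1) → ℝ) (S : Finset ι) (m : ℕ) : Finset (Finset ι) :=
  open Classical in (D.facesAbove S m).filter (· ⊆ D.tight v)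

lemma mem_facesAbove :
    R ∈ D.facesAbove S m ↔ D.IsClique R ∧ S ⊆ R ∧ R.card = S.card + m := by
  simp [facesAbove]

lemma mem_facesAt :
    R ∈ D.facesAt v S m ↔ D.IsClique R ∧ S ⊆ R ∧ R.card = S.card + m ∧ R ⊆ D.tight v := by
  simp [facesAt, mem_facesAbove, and_assoc]

lemma facesAbove_zero (hS : D.IsClique S) : D.facesAbove S 0 = {S} := by
  ext R
  rw [mem_facesAbove, Finset.mem_singleton]
  constructor
  · rintro ⟨-, hSR, hcard⟩
    exact (Finset.eq_of_subset_of_card_le hSR hcard.le).symm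
  · rintro rfl
    exact ⟨hS, subset_rfl, rfl⟩

lemma card_facesAbove_one (hS : D.IsClique S) :
    (D.facesAbove S 1).card = (D.link S).card := by
  classical
  symm
  refine Finset.card_bij (fun i _ => insert i S) (fun i hi => ?_) (fun i hi j _ hij => ?_)
    fun R hR => ?_
  · exact mem_facesAbove.2 ⟨hS.insert hi, Finset.subset_insert _ _,
      Finset.card_insert_of_notMem (notMem_of_mem_link hi)⟩
  · have himem : i ∈ insert j S := hij ▸ Finset.mem_insert_self i S
    exact (Finset.mem_insert.1 himem).resolve_right (notMem_of_mem_link hi)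
  · obtain ⟨hR, hSR, hcard⟩ := mem_facesAbove.1 hR
    obtain ⟨i, hi, rfl⟩ := Finset.exists_eq_insert_iff.2 ⟨hSR, hcard.symm⟩
    exact ⟨i, hR.mem_link hSR (Finset.mem_insert_self i S) hi, rfl⟩

lemma sum_facesAbove_sum_vertsOn {β : Type*} [AddCommMonoid β] (p : (Fin (n + 1) → ℝ) → Prop)
    [DecidablePred p] (f : Finset ι → (Fin (n + 1) → ℝ) → β) :
    ∑ R ∈ D.facesAbove S m, ∑ v ∈ D.vertsOn R with p v, f R v =
      ∑ v ∈ D.vertsOn S with p v, ∑ R ∈ D.facesAt v S m, f R v := by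
  refine Finset.sum_comm' fun R v => ?_
  simp only [mem_facesAbove, mem_facesAt, Finset.mem_filter, mem_vertsOn]
  exact ⟨fun ⟨⟨hR, hSR, hcard⟩, ⟨hv, hRv⟩, hp⟩ =>
    ⟨⟨hR, hSR, hcard, hRv⟩, ⟨hv, hSR.trans hRv⟩, hp⟩,
    fun ⟨⟨hR, hSR, hcard, hRv⟩, ⟨hv, _⟩, hp⟩ => ⟨⟨hR, hSR, hcard⟩, ⟨hv, hRv⟩, hp⟩⟩

lemma IsClique.sum_extremeCount (hR : D.IsClique R) (hl : D.IsGeneric l) :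
    ∑ v ∈ D.vertsOn R, D.extremeCount l R v = 2 := by
  classical
  have hone : ∀ l', D.IsGeneric l' →
      ∑ v ∈ D.vertsOn R, (if D.IsTop l' R v then (1 : ℤ) else 0) = 1 := by
    intro l' hl'
    obtain ⟨w, hw⟩ := hR.exists_isTop l'
    rw [Finset.sum_eq_single_of_mem w hw.1 fun v _ hvw => if_neg fun h => hvw (h.unique hl' hw),
      if_pos hw]
  simp only [extremeCount, Finset.sum_add_distrib]
  convert congrArg₂ (· + ·) (hone l hl) (hone (-l) hl.neg)
  norm_num

lemma sum_vertsOn_sum_extremeCount (hl : D.IsGeneric l) (S : Finset ι) (m : ℕ) :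
    ∑ v ∈ D.vertsOn S, ∑ R ∈ D.facesAt v S m, D.extremeCount l R v =
      2 * (D.facesAbove S m).card := by
  have h := D.sum_facesAbove_sum_vertsOn (S := S) (m := m) (fun _ => True) (D.extremeCount l)
  simp only [Finset.filter_true] at h
  rw [← h, Finset.sum_congr rfl fun R hR => (mem_facesAbove.1 hR).1.sum_extremeCount hl,
    Finset.sum_const, nsmul_eq_mul, mul_comm]

namespace IsFiniteVert

lemma sum_facesAt [DecidableEq ι] {β : Type*} [AddCommMonoid β] (hv : D.IsFiniteVert v)
    (hS : S ⊆ D.tight v) (hd : S.card + (m + d) = n) (f : Finset ι → β) :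
    ∑ R ∈ D.facesAt v S m, f R =
      ∑ Q ∈ (D.tight v \ S).powersetCard d, f (D.tight v \ Q) := by
  have hcard := hv.card_tight
  refine Finset.sum_bij' (fun R _ => D.tight v \ R) (fun Q _ => D.tight v \ Q) ?_ ?_ ?_ ?_ ?_
  · intro R hR
    obtain ⟨-, hSR, hRcard, hRv⟩ := mem_facesAt.1 hR
    have := Finset.card_sdiff_add_card_eq_card hRv
    exact Finset.mem_powersetCard.2 ⟨Finset.sdiff_subset_sdiff subset_rfl hSR, by omega⟩
  · intro Q hQ
    rw [Finset.mem_powersetCard, Finset.subset_sdiff] at hQ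
    have := Finset.card_sdiff_add_card_eq_card hQ.1.1
    exact mem_facesAt.2 ⟨hv.isClique_tight.subset Finset.sdiff_subset,
      Finset.subset_sdiff.2 ⟨hS, hQ.1.2.symm⟩, by omega, Finset.sdiff_subset⟩
  · exact fun R hR => Finset.sdiff_sdiff_eq_self (mem_facesAt.1 hR).2.2.2
  · exact fun Q hQ => Finset.sdiff_sdiff_eq_self
      ((Finset.mem_powersetCard.1 hQ).1.trans Finset.sdiff_subset)
  · intro R hR
    rw [Finset.sdiff_sdiff_eq_self (mem_facesAt.1 hR).2.2.2]

lemma card_sdiff_add_card [DecidableEq ι] (hv : D.IsFiniteVert v) (hS : S ⊆ D.tight v) :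
    (D.tight v \ S).card + S.card = n := by
  rw [Finset.card_sdiff_add_card_eq_card hS, hv.card_tight]

lemma card_facesAt (hv : D.IsFiniteVert v) (hS : S ⊆ D.tight v) (hd : S.card + (m + d) = n) :
    (D.facesAt v S m).card = (m + d).choose d := by
  classical
  have h := hv.sum_facesAt hS hd fun _ => 1
  have hcard := hv.card_sdiff_add_card hS
  rw [Finset.sum_const, Finset.sum_const, Finset.card_powersetCard,
    show (D.tight v \ S).card = m + d by omega] at h
  simpa using h

/-- For a generic functional, the walls of a finite vertex split into two classes; the vertex is
an extreme point of the faces opposite to subsets of one class. -/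
lemma exists_forall_sum_extremeCount (hv : D.IsFiniteVert v) (hl : D.IsGeneric l)
    (hS : S ⊆ D.tight v) : ∃ p q, p + q + S.card = n ∧ ∀ m d, S.card + (m + d) = n →
      ∑ R ∈ D.facesAt v S m, D.extremeCount l R v = p.choose d + q.choose d := by
  classical
  obtain ⟨U, hU⟩ := hv.exists_forall_isTop_iff hl
  refine ⟨((D.tight v \ S) ∩ U).card, ((D.tight v \ S) \ U).card, ?_, fun m d hmd => ?_⟩
  · rw [Finset.card_inter_add_card_sdiff, hv.card_sdiff_add_card hS]
  rw [hv.sum_facesAt hS hmd, ← sum_powersetCard_subset_or_disjoint]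
  refine Finset.sum_congr rfl fun Q hQ => ?_
  have hQv : Q ⊆ D.tight v := (Finset.mem_powersetCard.1 hQ).1.trans Finset.sdiff_subset
  obtain ⟨htop, hbot⟩ := hU (D.tight v \ Q) Finset.sdiff_subset
  rw [Finset.sdiff_sdiff_eq_self hQv] at htop hbot
  simp only [extremeCount, htop, hbot]

end IsFiniteVert

namespace IsFrame

variable [DecidableEq ι] {H : Finset ι}

lemma sum_facesAt (F : D.IsFrame v S H) {β : Type*} [AddCommMonoid β] (hd : m + d = H.card)
    (f : Finset ι → β) :
    ∑ R ∈ D.facesAt v S m, f R = ∑ Q ∈ H.powersetCard d, ∑ C ∈ (H \ Q).powerset,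
      f (D.cubeFace v S C ((H \ Q) \ C)) := by
  have hsub : ∀ {Q C : Finset ι}, C ∈ (H \ Q).powerset → C ⊆ H ∧ (H \ Q) \ C ⊆ H := fun hC =>
    ⟨(Finset.mem_powerset.1 hC).trans Finset.sdiff_subset,
      Finset.sdiff_subset.trans Finset.sdiff_subset⟩
  rw [Finset.sum_sigma']
  symm
  refine Finset.sum_bij (fun x _ => D.cubeFace v S x.2 ((H \ x.1) \ x.2)) ?_ ?_ ?_ fun _ _ => rfl
  · rintro ⟨Q, C⟩ hx
    obtain ⟨hQ, hC⟩ := Finset.mem_sigma.1 hx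
    obtain ⟨hQH, hQd⟩ := Finset.mem_powersetCard.1 hQ
    obtain ⟨hCH, hBH⟩ := hsub hC
    refine mem_facesAt.2 ⟨F.isClique_cubeFace hCH hBH Finset.disjoint_sdiff, subset_cubeFace, ?_,
      F.cubeFace_subset_tight hCH hBH⟩
    have hB := Finset.card_sdiff_add_card_eq_card (Finset.mem_powerset.1 hC)
    have hQ := Finset.card_sdiff_add_card_eq_card hQH
    rw [F.card_cubeFace hCH hBH]
    dsimp only at *
    omega
  · rintro ⟨Q, C⟩ hx ⟨Q', C'⟩ hx' heq
    obtain ⟨hQ, hC⟩ := Finset.mem_sigma.1 hx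
    obtain ⟨hQ', hC'⟩ := Finset.mem_sigma.1 hx'
    dsimp only at hQ hC hQ' hC' heq
    obtain ⟨rfl, hB⟩ := F.cubeFace_inj (hsub hC).1 (hsub hC).2 (hsub hC').1 (hsub hC').2 heq
    have hHQ : H \ Q = H \ Q' := by
      rw [← Finset.union_sdiff_of_subset (Finset.mem_powerset.1 hC), hB,
        Finset.union_sdiff_of_subset (Finset.mem_powerset.1 hC')]
    rw [← Finset.sdiff_sdiff_eq_self (Finset.mem_powersetCard.1 hQ).1, hHQ,
      Finset.sdiff_sdiff_eq_self (Finset.mem_powersetCard.1 hQ').1]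
  · intro R hR
    obtain ⟨hR, hSR, hcard, hRv⟩ := mem_facesAt.1 hR
    obtain ⟨A, hA, B, hB, hAB, rfl⟩ := F.exists_eq_cubeFace hR hSR hRv
    have hABH := Finset.union_subset hA hB
    rw [F.card_cubeFace hA hB, ← Finset.card_union_of_disjoint hAB] at hcard
    have hABcard := Finset.card_sdiff_add_card_eq_card hABH
    have hQ : (H \ (A ∪ B)).card = d := by omega
    refine ⟨⟨H \ (A ∪ B), A⟩, Finset.mem_sigma.2 ⟨Finset.mem_powersetCard.2
      ⟨Finset.sdiff_subset, hQ⟩, ?_⟩, ?_⟩ <;> dsimp only <;>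
      rw [Finset.sdiff_sdiff_eq_self hABH]
    · exact Finset.mem_powerset.2 Finset.subset_union_left
    · rw [Finset.union_sdiff_cancel_left hAB]

lemma card_facesAt (F : D.IsFrame v S H) (hd : m + d = H.card) :
    (D.facesAt v S m).card = 2 ^ m * (m + d).choose d := by
  have hcube : ∀ Q ∈ H.powersetCard d, (H \ Q).powerset.card = 2 ^ m := by
    intro Q hQ
    obtain ⟨hQH, hQd⟩ := Finset.mem_powersetCard.1 hQ
    rw [Finset.card_powerset, Finset.card_sdiff_of_subset hQH, hQd, ← hd, Nat.add_sub_cancel]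
  rw [Finset.card_eq_sum_ones, F.sum_facesAt hd fun _ => 1]
  simp only [← Finset.card_eq_sum_ones]
  rw [Finset.sum_congr rfl hcube, Finset.sum_const, Finset.card_powersetCard, ← hd, smul_eq_mul,
    mul_comm]

end IsFrame

/-- The faces at an ideal vertex are the faces of a cube; the unknown `χ c` counts those of the
cube's vertices at height `c` at which the functional increases away from `v`. -/
lemma IsIdealVert.exists_forall_sum_extremeCount (hv : D.IsIdealVert v) (hl : D.IsGeneric l)
    (hS : D.IsClique S) (hSv : S ⊆ D.tight v) :
    ∃ (h : ℕ) (χ : ℕ → ℤ), S.card + h + 1 = n ∧ ∀ m d, m + d = h →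
      ∑ R ∈ D.facesAt v S m, D.extremeCount l R v = 2 ^ m * h.choose d +
        ∑ c ∈ Finset.range (h + 1), (((h - c).choose d : ℤ) - c.choose d) * χ c := by
  classical
  obtain ⟨H, up, F, hup⟩ := hv.exists_isFrame_forall_isTop_iff hl hS hSv
  refine ⟨H.card, fun c => ∑ C ∈ H.powersetCard c, if up C then 1 else 0, F.card_add_one,
    fun m d hd => ?_⟩
  have hcount : ∀ Q, ∀ C ∈ (H \ Q).powerset,
      D.extremeCount l (D.cubeFace v S C ((H \ Q) \ C)) v =
        (1 - if up (H \ ((H \ Q) \ C)) then 1 else 0) + if up C then 1 else 0 := by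
    intro Q C hC
    obtain ⟨htop, hbot⟩ := hup C ((Finset.mem_powerset.1 hC).trans Finset.sdiff_subset)
      ((H \ Q) \ C) (Finset.sdiff_subset.trans Finset.sdiff_subset) Finset.disjoint_sdiff
    simp only [extremeCount, htop, hbot, ite_not]
    congr 1
    split_ifs <;> simp
  rw [F.sum_facesAt hd, Finset.sum_congr rfl fun Q _ => Finset.sum_congr rfl (hcount Q),
    sum_powersetCard_sum_cube H d fun C => if up C then 1 else 0, ← hd, Nat.add_sub_cancel, hd,
    Finset.sum_powerset]
  congr 1
  refine Finset.sum_congr rfl fun c _ => ?_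
  rw [Finset.mul_sum]
  refine Finset.sum_congr rfl fun C hC => ?_
  obtain ⟨hCH, rfl⟩ := Finset.mem_powersetCard.1 hC
  rw [Finset.card_sdiff_of_subset hCH]

end FaceCounts

lemma IsClique.vertsOn_nonempty (hS : D.IsClique S) : (D.vertsOn S).Nonempty :=
  (hS.exists_isTop 0).imp fun _ hv => hv.1

lemma mem_vertsOn_insert [DecidableEq ι] :
    v ∈ D.vertsOn (insert k S) ↔ v ∈ D.vertsOn S ∧ k ∈ D.tight v := by
  simp only [mem_vertsOn, Finset.insert_subset_iff]
  tauto

lemma IsFiniteVert.card_tight_inter_link [DecidableEq ι] (hv : D.IsFiniteVert v)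
    (hS : S ⊆ D.tight v) : (D.tight v ∩ D.link S).card + S.card = n := by
  have h : D.tight v ∩ D.link S = D.tight v \ S := by
    ext i
    rw [Finset.mem_inter, Finset.mem_sdiff]
    exact ⟨fun h => ⟨h.1, notMem_of_mem_link h.2⟩, fun h =>
      ⟨h.1, hv.isClique_tight.mem_link hS h.1 h.2⟩⟩
  rw [h, hv.card_sdiff_add_card hS]

lemma IsIdealVert.card_tight_inter_link [DecidableEq ι] (hv : D.IsIdealVert v)
    (hS : D.IsClique S) (hSv : S ⊆ D.tight v) :
    (D.tight v ∩ D.link S).card + 2 * (S.card + 1) = 2 * n := by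
  obtain ⟨H, F, -⟩ := hv.exists_isFrame hS hSv (fun _ => True) fun _ _ => Or.inl trivial
  have := F.card_tight_inter_link
  have := F.card_add_one
  omega

lemma IsClique.card_vertsOn_of_card_add_one (hS : D.IsClique S) (hcard : S.card + 1 = n) :
    (D.vertsOn S).card = 2 := by
  obtain ⟨l, hl⟩ := D.exists_isGeneric
  have hone : ∀ v ∈ D.vertsOn S, ∑ R ∈ D.facesAt v S 0, D.extremeCount l R v = 1 := by
    intro v hv
    obtain ⟨hv, hSv⟩ := mem_vertsOn.1 hv
    rcases isFiniteVert_or_isIdealVert hv with hv | hv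
    · obtain ⟨p, q, hpq, h⟩ := hv.exists_forall_sum_extremeCount hl hSv
      rw [h 0 1 hcard, Nat.choose_one_right, Nat.choose_one_right]
      omega
    · obtain ⟨h, χ, hh, hsum⟩ := hv.exists_forall_sum_extremeCount hl hS hSv
      obtain rfl : h = 0 := by omega
      simpa using hsum 0 0 rfl
  have h := sum_vertsOn_sum_extremeCount hl S 0
  rw [Finset.sum_congr rfl hone, facesAbove_zero hS, Finset.sum_const, Finset.card_singleton] at h
  exact_mod_cast (nsmul_one _).symm.trans h

section Polygons

variable {a b c d : ι}

variable (D) in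
/-- The face of `R` is two-dimensional. -/
structure IsPolygon (R : Finset ι) : Prop where
  clique : D.IsClique R
  card_add_two : R.card + 2 = n

variable (D) in
/-- The point `v` is a vertex of the two-dimensional face of `R`, and the walls `a` and `b` carry
the two edges of that face at `v`. -/
structure IsCorner (R : Finset ι) (v : Fin (n + 1) → ℝ) (a b : ι) : Prop where
  mem : v ∈ D.vertsOn R
  ne : a ≠ b
  iff : ∀ k, k ∈ D.tight v ∧ k ∈ D.link R ↔ k = a ∨ k = b

lemma IsPolygon.exists_isCorner (hR : D.IsPolygon R) (hv : v ∈ D.vertsOn R) :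
    ∃ a b, D.IsCorner R v a b := by
  classical
  obtain ⟨hR, hcard⟩ := hR
  obtain ⟨hvv, hRv⟩ := mem_vertsOn.1 hv
  have htwo : (D.tight v ∩ D.link R).card = 2 := by
    rcases isFiniteVert_or_isIdealVert hvv with hvv | hvv
    · have := hvv.card_tight_inter_link hRv
      omega
    · have := hvv.card_tight_inter_link hR hRv
      omega
  obtain ⟨a, b, hab, h⟩ := Finset.card_eq_two.1 htwo
  exact ⟨a, b, hv, hab, fun k => by rw [← Finset.mem_inter, h]; simp⟩

namespace IsCorner

lemma symm (h : D.IsCorner R v a b) : D.IsCorner R v b a :=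
  ⟨h.mem, h.ne.symm, fun k => (h.iff k).trans or_comm⟩

lemma mem_verts (h : D.IsCorner R v a b) : v ∈ D.verts := (mem_vertsOn.1 h.mem).1

lemma subset_tight (h : D.IsCorner R v a b) : R ⊆ D.tight v := (mem_vertsOn.1 h.mem).2

lemma left_mem_tight (h : D.IsCorner R v a b) : a ∈ D.tight v := ((h.iff a).2 (Or.inl rfl)).1

lemma left_mem_link (h : D.IsCorner R v a b) : a ∈ D.link R := ((h.iff a).2 (Or.inl rfl)).2

lemma notMem_tight (h : D.IsCorner R v a b) (hk : k ∈ D.link R) (hka : k ≠ a) (hkb : k ≠ b) :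
    k ∉ D.tight v := fun hkv => ((h.iff k).1 ⟨hkv, hk⟩).elim hka hkb

lemma vert_ne (h : D.IsCorner R v a b) (h' : D.IsCorner R w c d) (hca : c ≠ a) (hcb : c ≠ b) :
    v ≠ w := by
  rintro rfl
  exact h.notMem_tight h'.left_mem_link hca hcb h'.left_mem_tight

lemma tight_eq_union [DecidableEq ι] (h : D.IsCorner R v a b) (hv : D.IsFiniteVert v) :
    D.tight v = R ∪ {a, b} := by
  ext k
  simp only [Finset.mem_union, Finset.mem_insert, Finset.mem_singleton, ← h.iff k]
  exact ⟨fun hk => or_iff_not_imp_left.2 fun hkR =>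
      ⟨hk, hv.isClique_tight.mem_link h.subset_tight hk hkR⟩,
    fun hk => hk.elim (fun hkR => h.subset_tight hkR) And.left⟩

lemma eq_opp (h : D.IsCorner R v a b) (hv : D.IsIdealVert v) : b = D.opp v a := by
  have hopp := (h.iff _).1 ⟨hv.opp_mem h.left_mem_tight,
    hv.opp_mem_link h.subset_tight h.left_mem_tight h.left_mem_link⟩
  exact (hopp.resolve_left (hv.opp_spec h.left_mem_tight).2.1.symm).symm

lemma mink_of_isIdealVert (h : D.IsCorner R v a b) (hv : D.IsIdealVert v) :
    mink (D.e a) (D.e b) = -1 :=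
  h.eq_opp hv ▸ hv.mink_opp h.left_mem_tight

lemma mink_of_isFiniteVert (h : D.IsCorner R v a b) (hv : D.IsFiniteVert v) :
    mink (D.e a) (D.e b) = 0 :=
  hv.isClique_tight a h.left_mem_tight b h.symm.left_mem_tight h.ne

lemma mink_sq_le_one (h : D.IsCorner R v a b) : mink (D.e a) (D.e b) ^ 2 ≤ 1 := by
  rcases isFiniteVert_or_isIdealVert h.mem_verts with hv | hv
  · simp [h.mink_of_isFiniteVert hv]
  · simp [h.mink_of_isIdealVert hv]

lemma unique (h : D.IsCorner R v a b) (h' : D.IsCorner R w a b) : v = w := by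
  classical
  have hle : ∀ {v w}, D.IsCorner R v a b → D.IsCorner R w a b → D.IsFiniteVert v → w = v :=
    fun h h' hv => by
      refine eq_of_tight_subset h.mem_verts h'.mem_verts ?_
      rw [h.tight_eq_union hv, Finset.union_subset_iff, Finset.insert_subset_iff,
        Finset.singleton_subset_iff]
      exact ⟨h'.subset_tight, h'.left_mem_tight, h'.symm.left_mem_tight⟩
  rcases isFiniteVert_or_isIdealVert h.mem_verts with hv | hv
  · exact (hle h h' hv).symm
  rcases isFiniteVert_or_isIdealVert h'.mem_verts with hw | hw
  · exact hle h' h hw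
  exact hv.eq_of_opp_eq hw h.left_mem_tight h'.left_mem_tight (h.eq_opp hv ▸ h'.eq_opp hw)

lemma exists_next (h : D.IsCorner R v a b) (hR : D.IsPolygon R) :
    ∃ w c, D.IsCorner R w b c ∧ c ≠ a := by
  classical
  have hb := h.symm.left_mem_link
  have htwo := (hR.clique.insert hb).card_vertsOn_of_card_add_one (by
    rw [Finset.card_insert_of_notMem (notMem_of_mem_link hb)]
    exact hR.card_add_two)
  obtain ⟨w, hw, hwv⟩ := Finset.exists_mem_ne (htwo ▸ one_lt_two) v
  obtain ⟨hwR, hbw⟩ := mem_vertsOn_insert.1 hw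
  obtain ⟨c, hc⟩ : ∃ c, D.IsCorner R w b c := by
    obtain ⟨c, d, hcd⟩ := hR.exists_isCorner hwR
    rcases (hcd.iff b).1 ⟨hbw, hb⟩ with rfl | rfl
    exacts [⟨d, hcd⟩, ⟨c, hcd.symm⟩]
  refine ⟨w, c, hc, ?_⟩
  rintro rfl
  exact hwv (hc.symm.unique h)

lemma exists_decomposition (h : D.IsCorner R v a b) (hv : D.IsFiniteVert v)
    (hk : k ∈ D.link R) (hka : k ≠ a) (hkb : k ≠ b) : ∃ α : ℝ, α ≠ 0 ∧
      D.e k = α • v + (mink (D.e a) (D.e k) • D.e a + mink (D.e b) (D.e k) • D.e b) := by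
  classical
  have hkv := mink_neg_of_notMem_tight (mem_cone_of_mem_verts h.mem_verts)
    (h.notMem_tight hk hka hkb)
  obtain ⟨α, hα⟩ := hv.exists_decomposition (D.e k)
  have hdisj : Disjoint R ({a, b} : Finset ι) := by
    rw [Finset.disjoint_right]
    simp only [Finset.mem_insert, Finset.mem_singleton, ← h.iff]
    exact fun i hi => notMem_of_mem_link hi.2
  have hsum : ∑ s ∈ R, mink (D.e s) (D.e k) • D.e s = 0 :=
    Finset.sum_eq_zero fun s hs => by rw [mink_comm, mem_link.1 hk s hs, zero_smul]
  rw [h.tight_eq_union hv, Finset.sum_union hdisj, Finset.sum_pair h.ne, hsum, zero_add] at hα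
  refine ⟨α, ?_, hα⟩
  rintro rfl
  rw [mink_comm, hα] at hkv
  simp [mink_of_mem_tight h.left_mem_tight, mink_of_mem_tight h.symm.left_mem_tight] at hkv

lemma one_lt_sq_add_sq (h : D.IsCorner R v a b) (hv : D.IsFiniteVert v)
    (hk : k ∈ D.link R) (hka : k ≠ a) (hkb : k ≠ b) :
    1 < mink (D.e a) (D.e k) ^ 2 + mink (D.e b) (D.e k) ^ 2 := by
  obtain ⟨α, hα, hdec⟩ := h.exists_decomposition hv hk hka hkb
  have hvk : mink v (D.e k) = α * mink v v := by
    rw [hdec]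
    simp [mink_of_mem_tight h.left_mem_tight, mink_of_mem_tight h.symm.left_mem_tight]
  have hkk := congrArg (mink · (D.e k)) hdec
  simp only [D.unit, mink_add_left, mink_smul_left, hvk] at hkk
  nlinarith [mul_neg_of_pos_of_neg (sq_pos_of_ne_zero hα) hv.timelike]

lemma isIdealVert_of_triangle (h : D.IsCorner R v a b) (hv : D.IsFiniteVert v)
    (hw : D.IsCorner R w a k) (hx : D.IsCorner R x b k) : D.IsIdealVert w := by
  refine (isFiniteVert_or_isIdealVert hw.mem_verts).resolve_left fun hwf => ?_
  have hsq := h.one_lt_sq_add_sq hv hw.symm.left_mem_link hw.ne.symm hx.ne.symm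
  rw [hw.mink_of_isFiniteVert hwf] at hsq
  linarith [hx.mink_sq_le_one]

/-- In a hyperbolic quadrilateral at most three angles are right. -/
lemma mink_ne_zero_of_quadrilateral (h : D.IsCorner R v a b) (hv : D.IsFiniteVert v)
    (hw : D.IsCorner R w a c) (hwf : D.IsFiniteVert w) (hx : D.IsCorner R x b d)
    (hxf : D.IsFiniteVert x) (hcb : c ≠ b) (hda : d ≠ a) : mink (D.e c) (D.e d) ≠ 0 := by
  obtain ⟨α, hα, hdec⟩ := h.exists_decomposition hv hx.symm.left_mem_link hda hx.ne.symm
  have hcv := mink_neg_of_notMem_tight (mem_cone_of_mem_verts h.mem_verts)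
    (h.notMem_tight hw.symm.left_mem_link hw.ne.symm hcb)
  rw [hdec, hx.mink_of_isFiniteVert hxf]
  simp [hw.symm.mink_of_isFiniteVert hwf, hα, hcv.ne]

end IsCorner

namespace IsPolygon

lemma exists_path (hR : D.IsPolygon R) (hv : v ∈ D.vertsOn R) :
    ∃ a b c d w x, D.IsCorner R v a b ∧ D.IsCorner R w a c ∧ D.IsCorner R x b d ∧
      c ≠ b ∧ d ≠ a ∧ v ≠ w ∧ v ≠ x ∧ w ≠ x := by
  obtain ⟨a, b, h⟩ := hR.exists_isCorner hv
  obtain ⟨w, c, hw, hcb⟩ := h.symm.exists_next hR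
  obtain ⟨x, d, hx, hda⟩ := h.exists_next hR
  exact ⟨a, b, c, d, w, x, h, hw, hx, hcb, hda, h.vert_ne hw.symm hw.ne.symm hcb,
    h.vert_ne hx.symm hda hx.ne.symm, hw.vert_ne hx h.ne.symm hcb.symm⟩

lemma three_le_card_vertsOn (hR : D.IsPolygon R) : 3 ≤ (D.vertsOn R).card := by
  obtain ⟨v, hv⟩ := hR.clique.vertsOn_nonempty
  obtain ⟨a, b, c, d, w, x, -, hw, hx, -, -, hvw, hvx, hwx⟩ := hR.exists_path hv
  exact Finset.two_lt_card.2 ⟨v, hv, w, hw.mem, x, hx.mem, hvw, hvx, hwx⟩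

lemma five_le_of_ne (hR : D.IsPolygon R) (h : D.IsCorner R v a b) (hv : D.IsFiniteVert v)
    (hw : D.IsCorner R w a c) (hx : D.IsCorner R x b d) (hwx : w ≠ x) (hcb : c ≠ b) (hda : d ≠ a)
    (hcd : c ≠ d) : 5 ≤ (D.vertsOn R).card + (D.idealOn R).card := by
  obtain ⟨y, c', hy, hc'⟩ := hw.exists_next hR
  obtain ⟨z, d', hz, hd'⟩ := hx.exists_next hR
  have hvw := h.vert_ne hw.symm hw.ne.symm hcb
  have hvx := h.vert_ne hx.symm hda hx.ne.symm
  have hvy := h.vert_ne hy hw.ne.symm hcb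
  have hwy := hw.vert_ne hy.symm hc' hy.ne.symm
  have hxy := hx.vert_ne hy hcb hcd
  rcases (D.idealOn R).eq_empty_or_nonempty with hempty | hne
  · have hfin : ∀ {u}, u ∈ D.vertsOn R → D.IsFiniteVert u := fun hu =>
      (isFiniteVert_or_isIdealVert (mem_vertsOn.1 hu).1).resolve_right fun hui =>
        Finset.notMem_empty _ (hempty ▸ mem_idealOn.2 ⟨hui, (mem_vertsOn.1 hu).2⟩)
    have hyz : y ≠ z := by
      rintro rfl
      refine h.mink_ne_zero_of_quadrilateral hv hw (hfin hw.mem) hx (hfin hx.mem) hcb hda ?_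
      exact (hfin hy.mem).isClique_tight c hy.left_mem_tight d hz.left_mem_tight hcd
    have hvz := h.vert_ne hz hda hx.ne.symm
    have hwz := hw.vert_ne hz hda hcd.symm
    have hxz := hx.vert_ne hz.symm hd' hz.ne.symm
    have hsub : ({v, w, x, y, z} : Finset _) ⊆ D.vertsOn R := by
      simp [Finset.insert_subset_iff, -mem_vertsOn, h.mem, hw.mem, hx.mem, hy.mem, hz.mem]
    have hfive : ({v, w, x, y, z} : Finset (Fin (n + 1) → ℝ)).card = 5 := by
      simp [hvw, hvx, hvy, hvz, hwx, hwy, hwz, hxy, hxz, hyz]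
    exact (hfive ▸ Finset.card_le_card hsub).trans (Nat.le_add_right _ _)
  · have hfour : 3 < (D.vertsOn R).card := Finset.three_lt_card.2
      ⟨v, h.mem, w, hw.mem, x, hx.mem, y, hy.mem, hvw, hvx, hvy, hwx, hwy, hxy⟩
    have := hne.card_pos
    omega

lemma five_le_of_isFiniteVert (hR : D.IsPolygon R) (hv : v ∈ D.vertsOn R)
    (hvf : D.IsFiniteVert v) : 5 ≤ (D.vertsOn R).card + (D.idealOn R).card := by
  obtain ⟨a, b, c, d, w, x, h, hw, hx, hcb, hda, -, -, hwx⟩ := hR.exists_path hv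
  rcases eq_or_ne c d with rfl | hcd
  · have hwi := h.isIdealVert_of_triangle hvf hw hx
    have hxi := h.symm.isIdealVert_of_triangle hvf hx hw
    have htwo : 1 < (D.idealOn R).card := Finset.one_lt_card.2
      ⟨w, mem_idealOn.2 ⟨hwi, hw.subset_tight⟩, x, mem_idealOn.2 ⟨hxi, hx.subset_tight⟩, hwx⟩
    have hthree := hR.three_le_card_vertsOn
    omega
  · exact hR.five_le_of_ne h hvf hw hx hwx hcb hda hcd

lemma five_le (hR : D.IsPolygon R) : 5 ≤ (D.vertsOn R).card + (D.idealOn R).card := by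
  by_cases hfin : ∃ v ∈ D.vertsOn R, D.IsFiniteVert v
  · obtain ⟨v, hv, hvf⟩ := hfin
    exact hR.five_le_of_isFiniteVert hv hvf
  · have hsub : D.vertsOn R ⊆ D.idealOn R := fun v hv => mem_idealOn.2
      ⟨(isFiniteVert_or_isIdealVert (mem_vertsOn.1 hv).1).resolve_left fun h => hfin ⟨v, hv, h⟩,
        (mem_vertsOn.1 hv).2⟩
    have := Finset.card_le_card hsub
    have := hR.three_le_card_vertsOn
    omega

end IsPolygon

end Polygons

section FiveDimensional

lemma IsIdealVert.card_facesAt {m d : ℕ} (hv : D.IsIdealVert v) (hS : D.IsClique S)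
    (hSv : S ⊆ D.tight v) (hd : S.card + (m + d) + 1 = n) :
    (D.facesAt v S m).card = 2 ^ m * (m + d).choose d := by
  classical
  obtain ⟨H, F, -⟩ := hv.exists_isFrame hS hSv (fun _ => True) fun _ _ => Or.inl trivial
  exact F.card_facesAt (by have := F.card_add_one; omega)

lemma sum_vertsOn_eq_of_forall {f : (Fin (n + 1) → ℝ) → ℤ} {a b : ℤ}
    (hfin : ∀ v ∈ D.vertsOn S, D.IsFiniteVert v → f v = a)
    (hideal : ∀ v ∈ D.vertsOn S, D.IsIdealVert v → f v = a + b) :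
    ∑ v ∈ D.vertsOn S, f v = a * (D.vertsOn S).card + b * (D.idealOn S).card := by
  classical
  have hf : ∀ v ∈ D.vertsOn S, f v = a + if D.IsIdealVert v then b else 0 := by
    intro v hv
    split_ifs with hvi
    · exact hideal v hv hvi
    · rw [add_zero]
      exact hfin v hv ((isFiniteVert_or_isIdealVert (mem_vertsOn.1 hv).1).resolve_right hvi)
  rw [Finset.sum_congr rfl hf, Finset.sum_add_distrib, ← Finset.sum_filter]
  simp only [Finset.sum_const, nsmul_eq_mul, mul_comm, idealOn]

lemma five_mul_card_facesAbove_three_le (hS : D.IsClique S) (hd : S.card + 5 = n) :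
    5 * (D.facesAbove S 3).card ≤ 10 * (D.vertsOn S).card + 54 * (D.idealOn S).card := by
  classical
  have hpolygon : (D.facesAbove S 3).card * 5 ≤
      ∑ R ∈ D.facesAbove S 3, ((D.vertsOn R).card + (D.idealOn R).card) := by
    rw [← smul_eq_mul]
    refine Finset.card_nsmul_le_sum _ _ _ fun R hR => ?_
    obtain ⟨hR, -, hcard⟩ := mem_facesAbove.1 hR
    exact IsPolygon.five_le ⟨hR, by omega⟩
  have hideal : ∀ v ∈ D.vertsOn S, D.IsIdealVert v → (D.facesAt v S 3).card = 32 :=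
    fun v hv hvi => hvi.card_facesAt (m := 3) (d := 1) hS (mem_vertsOn.1 hv).2 hd
  have hverts : ∑ R ∈ D.facesAbove S 3, (D.vertsOn R).card =
      ∑ v ∈ D.vertsOn S, (D.facesAt v S 3).card := by
    simpa only [Finset.filter_true, Finset.card_eq_sum_ones] using
      D.sum_facesAbove_sum_vertsOn (S := S) (m := 3) (fun _ => True) fun _ _ => 1
  have hideals : ∑ R ∈ D.facesAbove S 3, (D.idealOn R).card = 32 * (D.idealOn S).card := by
    have h := D.sum_facesAbove_sum_vertsOn (S := S) (m := 3) D.IsIdealVert fun _ _ => 1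
    simp only [← Finset.card_eq_sum_ones] at h
    refine h.trans (Finset.sum_const_nat fun v hv => ?_) |>.trans (mul_comm _ _)
    exact hideal v (Finset.mem_filter.1 hv).1 (Finset.mem_filter.1 hv).2
  have hcount : ∑ v ∈ D.vertsOn S, ((D.facesAt v S 3).card : ℤ) =
      10 * (D.vertsOn S).card + 22 * (D.idealOn S).card :=
    sum_vertsOn_eq_of_forall
      (fun v hv hvf => by exact_mod_cast hvf.card_facesAt (d := 2) (mem_vertsOn.1 hv).2 hd)
      fun v hv hvi => by exact_mod_cast hideal v hv hvi
  rw [Finset.sum_add_distrib, hverts, hideals] at hpolygon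
  zify at hpolygon ⊢
  linarith

/-- The terms depending on the functional, which differ from vertex to vertex, cancel in this
combination. -/
lemma sum_extremeCount_of_card_add_five {l : (Fin (n + 1) → ℝ) →ₗ[ℝ] ℝ} (hl : D.IsGeneric l)
    (hS : D.IsClique S) (hd : S.card + 5 = n) (hv : v ∈ D.vertsOn S) :
    (D.IsFiniteVert v →
      ∑ R ∈ D.facesAt v S 3, D.extremeCount l R v + 4 * ∑ R ∈ D.facesAt v S 0, D.extremeCount l R v
        - 2 * ∑ R ∈ D.facesAt v S 1, D.extremeCount l R v = 4) ∧
    (D.IsIdealVert v →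
      ∑ R ∈ D.facesAt v S 3, D.extremeCount l R v + 4 * ∑ R ∈ D.facesAt v S 0, D.extremeCount l R v
        - 2 * ∑ R ∈ D.facesAt v S 1, D.extremeCount l R v = 20) := by
  obtain ⟨-, hSv⟩ := mem_vertsOn.1 hv
  constructor
  · intro hvf
    obtain ⟨p, q, hpq, hsum⟩ := hvf.exists_forall_sum_extremeCount hl hSv
    rw [hsum 3 2 hd, hsum 0 5 hd, hsum 1 4 hd]
    obtain rfl : q = 5 - p := by omega
    have hp : p ≤ 5 := by omega
    interval_cases p <;> decide
  · intro hvi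
    obtain ⟨h, χ, hh, hsum⟩ := hvi.exists_forall_sum_extremeCount hl hS hSv
    obtain rfl : h = 4 := by omega
    rw [hsum 3 1 rfl, hsum 0 4 rfl, hsum 1 3 rfl]
    simp [Finset.sum_range_succ, Nat.choose]
    ring

/-- A linear relation between face numbers, in the style of the Dehn–Sommerville equations. -/
lemma card_facesAbove_three_add_four (hS : D.IsClique S) (hd : S.card + 5 = n) :
    (D.facesAbove S 3).card + 4 =
      2 * (D.vertsOn S).card + 8 * (D.idealOn S).card + 2 * (D.link S).card := by
  obtain ⟨l, hl⟩ := D.exists_isGeneric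
  have hlocal := fun v hv => sum_extremeCount_of_card_add_five (v := v) hl hS hd hv
  have hsum := sum_vertsOn_eq_of_forall (a := 4) (b := 16) (fun v hv => (hlocal v hv).1)
    fun v hv => (hlocal v hv).2
  rw [Finset.sum_sub_distrib, Finset.sum_add_distrib, ← Finset.mul_sum, ← Finset.mul_sum,
    sum_vertsOn_sum_extremeCount hl, sum_vertsOn_sum_extremeCount hl,
    sum_vertsOn_sum_extremeCount hl, card_facesAbove_one hS, facesAbove_zero hS,
    Finset.card_singleton, Nat.cast_one] at hsum
  zify
  linarith

lemma five_mul_card_link_le (hS : D.IsClique S) (hd : S.card + 5 = n) :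
    5 * (D.link S).card ≤ 7 * (D.idealOn S).card + 10 := by
  have := five_mul_card_facesAbove_three_le hS hd
  have := card_facesAbove_three_add_four hS hd
  omega

end FiveDimensional

section Recursion

variable {d : ℕ}

lemma mem_idealOn_insert [DecidableEq ι] :
    v ∈ D.idealOn (insert k S) ↔ v ∈ D.idealOn S ∧ k ∈ D.tight v := by
  rw [mem_idealOn, mem_idealOn, Finset.insert_subset_iff]
  tauto

/-- The facets of a face include a given one, those orthogonal to it, and one for each of its
ideal vertices, asymptotic to it there. -/
lemma card_link_insert_le [DecidableEq ι] (hi : i ∈ D.link S) :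
    1 + (D.link (insert i S)).card + (D.idealOn (insert i S)).card ≤ (D.link S).card := by
  have hopp : Set.InjOn (D.opp · i) (D.idealOn (insert i S) : Set (Fin (n + 1) → ℝ)) := by
    intro v hv w hw h
    obtain ⟨⟨hv, -⟩, hiv⟩ := (mem_idealOn_insert.trans (and_congr_left' mem_idealOn)).1 hv
    obtain ⟨⟨hw, -⟩, hiw⟩ := (mem_idealOn_insert.trans (and_congr_left' mem_idealOn)).1 hw
    exact hv.eq_of_opp_eq hw hiv hiw h
  have hsub : D.link (insert i S) ⊆ D.link S := fun k hk =>
    mem_link.2 fun s hs => mem_link.1 hk s (Finset.mem_insert_of_mem hs)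
  rw [← Finset.card_image_of_injOn hopp, add_comm 1, ← Finset.card_insert_of_notMem
    fun h => notMem_of_mem_link h (Finset.mem_insert_self i S), ← Finset.card_union_of_disjoint]
  · refine Finset.card_le_card (Finset.union_subset (Finset.insert_subset hi hsub) fun k hk => ?_)
    obtain ⟨v, hv, rfl⟩ := Finset.mem_image.1 hk
    obtain ⟨hv, hiv⟩ := mem_idealOn_insert.1 hv
    exact (mem_idealOn.1 hv).1.opp_mem_link (mem_idealOn.1 hv).2 hiv hi
  · refine Finset.disjoint_right.2 fun k hk hk' => ?_
    obtain ⟨v, hv, rfl⟩ := Finset.mem_image.1 hk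
    obtain ⟨hv, hiv⟩ := mem_idealOn_insert.1 hv
    obtain ⟨-, hne, hmink⟩ := (mem_idealOn.1 hv).1.opp_spec hiv
    rcases Finset.mem_insert.1 hk' with h | h
    · exact hne h.symm
    · exact hmink (mink_comm (D.e i) _ ▸ mem_link.1 h i (Finset.mem_insert_self i S))

lemma sum_card_idealOn_insert [DecidableEq ι] (hS : D.IsClique S)
    (hd : S.card + (d + 1) = n) :
    ∑ i ∈ D.link S, (D.idealOn (insert i S)).card = 2 * d * (D.idealOn S).card := by
  have hfilter : ∀ i ∈ D.link S,
      (D.idealOn (insert i S)).card = ((D.idealOn S).filter (i ∈ D.tight ·)).card :=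
    fun i _ => congrArg Finset.card (by ext v; rw [mem_idealOn_insert, Finset.mem_filter])
  rw [Finset.sum_congr rfl hfilter]
  simp only [Finset.card_filter]
  rw [Finset.sum_comm, mul_comm]
  refine Finset.sum_const_nat fun v hv => ?_
  obtain ⟨hv, hSv⟩ := mem_idealOn.1 hv
  have := hv.card_tight_inter_link hS hSv
  rw [← Finset.card_filter, Finset.filter_mem_eq_inter, Finset.inter_comm]
  omega

lemma two_mul_le_card_link (hS : D.IsClique S) (hd : S.card + (d + 1) = n)
    (h : (D.idealOn S).Nonempty) : 2 * d ≤ (D.link S).card := by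
  classical
  obtain ⟨v, hv⟩ := h
  obtain ⟨hv, hSv⟩ := mem_idealOn.1 hv
  have := Finset.card_le_card (Finset.inter_subset_right (s₁ := D.tight v) (s₂ := D.link S))
  have := hv.card_tight_inter_link hS hSv
  omega

lemma le_card_link (hS : D.IsClique S) (hd : S.card + (d + 1) = n) (hd1 : 1 ≤ d) :
    d + 1 ≤ (D.link S).card := by
  classical
  obtain ⟨v, hv⟩ := hS.vertsOn_nonempty
  obtain ⟨hv, hSv⟩ := mem_vertsOn.1 hv
  rcases isFiniteVert_or_isIdealVert hv with hv | hv
  · have := Finset.card_le_card (Finset.inter_subset_right (s₁ := D.tight v) (s₂ := D.link S))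
    have := hv.card_tight_inter_link hSv
    omega
  · have := two_mul_le_card_link hS hd ⟨v, mem_idealOn.2 ⟨hv, hSv⟩⟩
    omega

variable (D) in
/-- All `d`-dimensional faces have at least `a` facets and `b` ideal vertices. -/
def FacesAtLeast (d a b : ℕ) : Prop :=
  ∀ S, D.IsClique S → S.card + d = n → a ≤ (D.link S).card ∧ b ≤ (D.idealOn S).card

lemma facesAtLeast_five : D.FacesAtLeast 5 11 7 := by
  classical
  intro S hS hd
  have h57 := five_mul_card_link_le hS hd
  have hlink := le_card_link (d := 4) hS hd (by norm_num)
  have h8 := two_mul_le_card_link (d := 4) hS hd (Finset.card_pos.1 (by omega))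
  suffices 11 ≤ (D.link S).card by omega
  by_contra! hlt
  obtain ⟨i, hi, hi5⟩ : ∃ i ∈ D.link S, 4 < (D.idealOn (insert i S)).card := by
    refine Finset.exists_lt_of_sum_lt ?_
    rw [sum_card_idealOn_insert (d := 4) hS hd, Finset.sum_const, smul_eq_mul]
    omega
  have hfacet := card_link_insert_le hi
  have h6 := two_mul_le_card_link (d := 3) (hS.insert hi)
    (by rw [Finset.card_insert_of_notMem (notMem_of_mem_link hi)]; omega)
    (Finset.card_pos.1 (by omega))
  omega

lemma FacesAtLeast.succ {a b : ℕ} (h : D.FacesAtLeast d a b) (hd : 1 ≤ d) :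
    D.FacesAtLeast (d + 1) (1 + a + b) ((1 + a + b) * b ⌈/⌉ (2 * d)) := by
  classical
  intro S hS hSd
  have hfacet : ∀ i ∈ D.link S,
      a ≤ (D.link (insert i S)).card ∧ b ≤ (D.idealOn (insert i S)).card := fun i hi =>
    h _ (hS.insert hi)
      (by rw [Finset.card_insert_of_notMem (notMem_of_mem_link hi)]; omega)
  have hlink : 1 + a + b ≤ (D.link S).card := by
    obtain ⟨i, hi⟩ : (D.link S).Nonempty :=
      Finset.card_pos.1 (by have := le_card_link hS hSd hd; omega)
    have := card_link_insert_le hi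
    have := hfacet i hi
    omega
  refine ⟨hlink, (ceilDiv_le_iff_le_mul (by omega)).2 ?_⟩
  calc (1 + a + b) * b ≤ (D.link S).card • b := Nat.mul_le_mul_right b hlink
    _ ≤ ∑ i ∈ D.link S, (D.idealOn (insert i S)).card :=
      Finset.card_nsmul_le_sum _ _ _ fun i hi => (hfacet i hi).2
    _ = 2 * d * (D.idealOn S).card := sum_card_idealOn_insert hS hSd

end Recursion

end RightAngledCone

/-- Lower bounds for the numbers of facets and of ideal vertices of a `(k + 5)`-dimensional face of
a right-angled polyhedron of finite volume. -/
def faceBound : ℕ → ℕ × ℕ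
  | 0 => (11, 7)
  | k + 1 =>
    let c := 1 + (faceBound k).1 + (faceBound k).2
    (c, c * (faceBound k).2 ⌈/⌉ (2 * (k + 5)))

lemma RightAngledCone.facesAtLeast_faceBound {n : ℕ} {ι : Type*} [Fintype ι]
    (D : RightAngledCone n ι) : ∀ k, D.FacesAtLeast (k + 5) (faceBound k).1 (faceBound k).2
  | 0 => facesAtLeast_five
  | k + 1 => (D.facesAtLeast_faceBound k).succ (by omega)

lemma idealVertexBound_le_faceBound {k : ℕ} (hk : k ≤ 7) :
    idealVertexBound (k + 5) ≤ (faceBound k).2 := by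
  interval_cases k <;> norm_num [idealVertexBound, faceBound, Nat.ceilDiv_eq_add_pred_div]

/-- A minimal subsystem with the same solutions is irredundant. -/
lemma exists_irredundant {κ M : Type*} [AddCommGroup M] [Module ℝ M] (f : κ → M →ₗ[ℝ] ℝ)
    (V : Submodule ℝ M) (A : Finset κ) {p : M} (hpV : p ∈ V) (hp : ∀ k ∈ A, f k p < 0) :
    ∃ J ⊆ A, (∀ x ∈ V, (∀ k ∈ J, f k x ≤ 0) → ∀ k ∈ A, f k x ≤ 0) ∧
      ∀ k ∈ J, ∃ z ∈ V, f k z = 0 ∧ ∀ l ∈ J, l ≠ k → f l z < 0 := by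
  classical
  obtain ⟨J, hJ, hmin⟩ := Finset.exists_min_image
    (A.powerset.filter fun J => ∀ x ∈ V, (∀ k ∈ J, f k x ≤ 0) → ∀ k ∈ A, f k x ≤ 0) Finset.card
    ⟨A, by simp⟩
  simp only [Finset.mem_filter, Finset.mem_powerset] at hJ hmin
  refine ⟨J, hJ.1, hJ.2, fun k hk => ?_⟩
  obtain ⟨y, hyV, hy, hky⟩ : ∃ y ∈ V, (∀ l ∈ J.erase k, f l y ≤ 0) ∧ 0 < f k y := by
    by_contra! hcon
    have := hmin (J.erase k) ⟨(Finset.erase_subset _ _).trans hJ.1, fun x hx h =>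
      hJ.2 x hx fun l hl => by
        by_cases hlk : l = k
        · exact hlk ▸ hcon x hx h
        · exact h l (Finset.mem_erase.2 ⟨hlk, hl⟩)⟩
    exact absurd this (not_le.2 (Finset.card_erase_lt_of_mem hk))
  refine ⟨f k y • p - f k p • y, V.sub_mem (V.smul_mem _ hpV) (V.smul_mem _ hyV), ?_, ?_⟩
  · simp only [map_sub, map_smul, smul_eq_mul]
    ring
  · intro l hl hlk
    simp only [map_sub, map_smul, smul_eq_mul]
    nlinarith [mul_neg_of_pos_of_neg hky (hp l (hJ.1 hl)),
      mul_nonneg_of_nonpos_of_nonpos (hp k (hJ.1 hk)).le (hy l (Finset.mem_erase.2 ⟨hlk, hl⟩))]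

lemma exists_forall_notMem_span_pair {V : Type*} [AddCommGroup V] [Module ℝ V]
    (hV : 2 < Module.finrank ℝ V) {Z : Set V} (hZ : Z.Finite) (x : V) :
    ∃ u, ∀ z ∈ Z, u ∉ Submodule.span ℝ {z, x} := by
  classical
  by_contra! hcon
  have := hZ.to_subtype
  obtain ⟨z, hz⟩ := Subspace.exists_eq_top_of_iUnion_eq_univ
    (p := fun z : Z => Submodule.span ℝ {(z : V), x})
    (Set.eq_univ_of_forall fun u => Set.mem_iUnion.2 <| by simpa using hcon u)
  have hcard := finrank_span_finset_le_card (R := ℝ) ({(z : V), x} : Finset V)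
  rw [Finset.coe_pair, Set.finrank, hz, finrank_top] at hcard
  exact (hcard.trans Finset.card_le_two).not_gt hV

section Klein

variable {n : ℕ} {e x y : Fin (n + 1) → ℝ}

/-- The point of Minkowski space at height one over a point of the Klein model. -/
def kleinLift (p : EuclideanSpace ℝ (Fin n)) : Fin (n + 1) → ℝ := Fin.cons 1 fun i => p i

/-- The spatial part of a vector of Minkowski space. -/
def spatial (x : Fin (n + 1) → ℝ) : EuclideanSpace ℝ (Fin n) := WithLp.toLp 2 fun i => x i.succ

@[simp] lemma kleinLift_zero (p : EuclideanSpace ℝ (Fin n)) : kleinLift p 0 = 1 := rfl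

@[simp] lemma kleinLift_succ (p : EuclideanSpace ℝ (Fin n)) (i : Fin n) :
    kleinLift p i.succ = p i := rfl

@[simp] lemma spatial_apply (x : Fin (n + 1) → ℝ) (i : Fin n) : spatial x i = x i.succ := rfl

@[simp] lemma spatial_kleinLift (p : EuclideanSpace ℝ (Fin n)) : spatial (kleinLift p) = p := rfl

@[simp] lemma kleinMap_kleinLift (p : EuclideanSpace ℝ (Fin n)) : kleinMap (kleinLift p) = p := by
  ext i
  simp [kleinMap]

lemma kleinLift_add_smul (p d : EuclideanSpace ℝ (Fin n)) (t : ℝ) :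
    kleinLift (p + t • d) = kleinLift p + t • (kleinLift (p + d) - kleinLift p) := by
  funext i
  cases i using Fin.cases <;> simp

lemma kleinMap_smul {c : ℝ} (hc : c ≠ 0) : kleinMap (c • x) = kleinMap x := by
  ext i
  simp [kleinMap, mul_div_mul_left, hc]

lemma smul_kleinLift_kleinMap (hx : x 0 ≠ 0) : x 0 • kleinLift (kleinMap x) = x := by
  funext i
  cases i using Fin.cases with
  | zero => simp
  | succ i => simp [kleinMap, mul_div_cancel₀, hx]

lemma mink_eq_inner (x y : Fin (n + 1) → ℝ) :
    mink x y = inner ℝ (spatial x) (spatial y) - x 0 * y 0 := by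
  simp only [mink, PiLp.inner_apply, spatial_apply, RCLike.inner_apply, conj_trivial, mul_comm]
  ring

lemma mink_kleinLift (e : Fin (n + 1) → ℝ) (p : EuclideanSpace ℝ (Fin n)) :
    mink e (kleinLift p) = inner ℝ (spatial e) p - e 0 := by
  simp [mink_eq_inner]

lemma mink_kleinLift_self (p : EuclideanSpace ℝ (Fin n)) :
    mink (kleinLift p) (kleinLift p) = ‖p‖ ^ 2 - 1 := by
  simp [mink_eq_inner]

lemma mink_kleinLift_add_smul (e : Fin (n + 1) → ℝ) (p d : EuclideanSpace ℝ (Fin n)) (t : ℝ) :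
    mink e (kleinLift (p + t • d)) = mink e (kleinLift p) + t * inner ℝ (spatial e) d := by
  simp only [mink_kleinLift, inner_add_right, inner_smul_right]
  ring

lemma mink_eq_mul_mink_kleinLift (hx : x 0 ≠ 0) :
    mink e x = x 0 * mink e (kleinLift (kleinMap x)) := by
  rw [← mink_smul_right, smul_kleinLift_kleinMap hx]

lemma mink_self_eq_mul_norm_sq_sub_one (hx : x 0 ≠ 0) :
    mink x x = x 0 ^ 2 * (‖kleinMap x‖ ^ 2 - 1) := by
  rw [← mink_kleinLift_self, sq, mul_assoc, ← mink_smul_right, ← mink_smul_left,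
    smul_kleinLift_kleinMap hx]

lemma mink_kleinLift_nonpos_iff (hx : 0 < x 0) :
    mink e (kleinLift (kleinMap x)) ≤ 0 ↔ mink e x ≤ 0 := by
  rw [mink_eq_mul_mink_kleinLift hx.ne', mul_nonpos_iff_pos_imp_nonpos]
  simp [hx, hx.le]

lemma kleinLift_mem_futureCone_iff {p : EuclideanSpace ℝ (Fin n)} :
    kleinLift p ∈ futureCone n ↔ ‖p‖ ≤ 1 := by
  simp [futureCone, mink_kleinLift_self]

end Klein

section FutureCone

variable {n : ℕ} {x y : Fin (n + 1) → ℝ} {c : ℝ}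

lemma smul_mem_futureCone (hx : x ∈ futureCone n) (hc : 0 ≤ c) : c • x ∈ futureCone n := by
  refine ⟨?_, mul_nonneg hc hx.2⟩
  rw [mink_smul_left, mink_smul_right, ← mul_assoc]
  exact mul_nonpos_of_nonneg_of_nonpos (mul_self_nonneg c) hx.1

lemma continuous_mink_self : Continuous fun x : Fin (n + 1) → ℝ => mink x x := by
  unfold mink
  fun_prop

lemma isClosed_futureCone : IsClosed (futureCone n) :=
  (isClosed_le continuous_mink_self continuous_const).and
    (isClosed_le continuous_const (continuous_apply 0))

lemma futureCone_mem_nhds (hx : mink x x < 0) (hx0 : 0 < x 0) : futureCone n ∈ nhds x := by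
  filter_upwards [continuous_mink_self.continuousAt.eventually_lt continuousAt_const hx,
    continuousAt_const.eventually_lt (continuous_apply 0).continuousAt hx0] with y hy hy0
  exact ⟨hy.le, hy0.le⟩

lemma mink_self_eq_zero_of_mem_frontier (hx : x ∈ frontier (futureCone n)) : mink x x = 0 := by
  have hxc := isClosed_futureCone.frontier_subset hx
  refine hxc.1.antisymm (not_lt.1 fun hneg => hx.2 (mem_interior_iff_mem_nhds.2 ?_))
  exact futureCone_mem_nhds hneg
    (hxc.2.lt_of_ne fun h0 => (mink_self_nonneg h0.symm).not_gt hneg)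

lemma mem_futureCone_of_forall_add_smul (h : ∀ t : ℝ, 0 < t → y + t • x ∈ futureCone n) :
    x ∈ futureCone n := by
  have hlim : Filter.Tendsto (fun s : ℝ => s • y + x) (nhdsWithin 0 (Set.Ioi 0)) (nhds x) :=
    ((by fun_prop : Continuous fun s : ℝ => s • y + x).tendsto' 0 x (by simp)).mono_left
      nhdsWithin_le_nhds
  refine isClosed_futureCone.mem_of_tendsto hlim ?_
  filter_upwards [self_mem_nhdsWithin] with s (hs : 0 < s)
  have hsmul : s • (y + s⁻¹ • x) = s • y + x := by rw [smul_add, smul_inv_smul₀ hs.ne']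
  exact hsmul ▸ smul_mem_futureCone (h s⁻¹ (inv_pos.2 hs)) hs.le

/-- A ray leaving the light cone crosses its boundary. -/
lemma exists_add_smul_mem_frontier (hx : x ∉ futureCone n) (hy : y ∈ futureCone n) :
    ∃ t : ℝ, 0 ≤ t ∧ y + t • x ∈ frontier (futureCone n) := by
  have hcont : Continuous fun t : NNReal => y + (t : ℝ) • x := by fun_prop
  have hne : (frontier ((fun t : NNReal => y + (t : ℝ) • x) ⁻¹' futureCone n)).Nonempty := by
    refine nonempty_frontier_iff.2 ⟨⟨0, by simpa using hy⟩, fun huniv => hx ?_⟩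
    exact mem_futureCone_of_forall_add_smul fun t ht =>
      Set.eq_univ_iff_forall.1 huniv ⟨t, ht.le⟩
  obtain ⟨t, ht⟩ := hne
  exact ⟨t, t.2, hcont.frontier_preimage_subset _ ht⟩

end FutureCone

namespace HypPolyhedron

variable {n : ℕ} {P : HypPolyhedron n} {p q : EuclideanSpace ℝ (Fin n)}
variable {x y z : Fin (n + 1) → ℝ} {i j k : Fin P.m} {A : Finset (Fin P.m)}

lemma image_carrier : kleinMap '' P.carrier =
    {p | ‖p‖ < 1 ∧ ∀ i, mink (P.e i) (kleinLift p) ≤ 0} := by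
  ext p
  constructor
  · rintro ⟨x, ⟨⟨hx, hx0⟩, hxP⟩, rfl⟩
    refine ⟨?_, fun i => (mink_kleinLift_nonpos_iff hx0).2 (hxP i)⟩
    rw [mink_self_eq_mul_norm_sq_sub_one hx0.ne'] at hx
    by_contra! h
    nlinarith [mul_nonneg (sq_nonneg (x 0)) (sub_nonneg.2 (one_le_pow₀ (n := 2) h))]
  · rintro ⟨hp, hpP⟩
    have hpos : 0 < 1 - ‖p‖ ^ 2 := by nlinarith [norm_nonneg p]
    set c := (Real.sqrt (1 - ‖p‖ ^ 2))⁻¹ with hc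
    have hc0 : 0 < c := inv_pos.2 (Real.sqrt_pos.2 hpos)
    have hcc : c * (c * (‖p‖ ^ 2 - 1)) = -1 := by
      have : Real.sqrt (1 - ‖p‖ ^ 2) ^ 2 = 1 - ‖p‖ ^ 2 := Real.sq_sqrt hpos.le
      rw [hc]
      field_simp
      linarith
    refine ⟨c • kleinLift p, ⟨⟨?_, by simpa using hc0⟩, fun i => ?_⟩, ?_⟩
    · rw [mink_smul_left, mink_smul_right, mink_kleinLift_self, hcc]
    · rw [mink_smul_right]
      exact mul_nonpos_of_nonneg_of_nonpos hc0.le (hpP i)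
    · rw [kleinMap_smul hc0.ne', kleinMap_kleinLift]

lemma spatial_ne_zero (i : Fin P.m) : spatial (P.e i) ≠ 0 := fun h => by
  have := P.unit i
  rw [mink_eq_inner, h, inner_zero_left] at this
  nlinarith [mul_self_nonneg (P.e i 0)]

variable (P) in
lemma exists_interior_point :
    ∃ q : EuclideanSpace ℝ (Fin n), ‖q‖ < 1 ∧ ∀ i, mink (P.e i) (kleinLift q) < 0 := by
  obtain ⟨q, hq⟩ : (interior (kleinMap '' P.carrier)).Nonempty := P.nonempty_int
  rw [image_carrier] at hq
  obtain ⟨hq1, hqP⟩ := interior_subset hq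
  refine ⟨q, hq1, fun i => (hqP i).lt_of_ne fun hqi => ?_⟩
  have hlim : Filter.Tendsto (fun t : ℝ => q + t • spatial (P.e i)) (nhdsWithin 0 (Set.Ioi 0))
      (nhds q) :=
    ((by fun_prop : Continuous fun t : ℝ => q + t • spatial (P.e i)).tendsto' 0 q
      (by simp)).mono_left nhdsWithin_le_nhds
  obtain ⟨t, ht, ht0⟩ :=
    ((hlim.eventually (mem_interior_iff_mem_nhds.1 hq)).and self_mem_nhdsWithin).exists
  have hti := ht.2 i
  rw [mink_kleinLift_add_smul, hqi, zero_add] at hti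
  exact hti.not_gt (mul_pos ht0 (real_inner_self_pos.2 (spatial_ne_zero i)))

lemma mem_cl : p ∈ P.cl ↔ ‖p‖ ≤ 1 ∧ ∀ i, mink (P.e i) (kleinLift p) ≤ 0 := by
  set K : Set (EuclideanSpace ℝ (Fin n)) :=
    Metric.closedBall 0 1 ∩ ⋂ i, {p | inner ℝ (spatial (P.e i)) p ≤ P.e i 0} with hK
  have hmem : ∀ p, p ∈ K ↔ ‖p‖ ≤ 1 ∧ ∀ i, mink (P.e i) (kleinLift p) ≤ 0 := fun p => by
    simp [hK, mink_kleinLift]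
  have hconvex : Convex ℝ K := (convex_closedBall 0 1).inter <| convex_iInter fun i =>
    convex_halfSpace_le (innerₛₗ ℝ (spatial (P.e i))).isLinear _
  have hclosed : IsClosed K := Metric.isClosed_closedBall.inter <| isClosed_iInter fun i =>
    isClosed_le (by fun_prop) continuous_const
  have hsub : kleinMap '' P.carrier ⊆ K := fun p hp => by
    rw [image_carrier] at hp
    exact (hmem p).2 ⟨hp.1.le, hp.2⟩
  have hint : interior K ⊆ kleinMap '' P.carrier := fun p hp => by
    rw [image_carrier]
    have hball : p ∈ interior (Metric.closedBall 0 1) := interior_mono Set.inter_subset_left hp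
    rw [interior_closedBall _ one_ne_zero, mem_ball_zero_iff] at hball
    exact ⟨hball, ((hmem p).1 (interior_subset hp)).2⟩
  have hcl : P.cl = K := by
    refine (closure_minimal hsub hclosed).antisymm ?_
    rw [← hclosed.closure_eq, ← hconvex.closure_interior_eq_closure_of_nonempty_interior
      (P.nonempty_int.mono (interior_mono hsub))]
    exact closure_mono hint
  rw [hcl, hmem]

lemma mem_verts_of_norm_eq_one (hp : p ∈ P.cl) (h : ‖p‖ = 1) : p ∈ P.verts := by
  intro _
  have hpp : inner ℝ p p = (1 : ℝ) := by rw [real_inner_self_eq_norm_sq, h, one_pow]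
  refine ⟨innerSL ℝ p, Set.ext fun x => ⟨?_, ?_⟩⟩
  · rintro rfl
    refine ⟨hp, fun y hy => ?_⟩
    calc inner ℝ x y ≤ ‖x‖ * ‖y‖ := real_inner_le_norm x y
      _ ≤ inner ℝ x x := by rw [h, hpp, one_mul]; exact (mem_cl.1 hy).1
  · rintro ⟨hx, hmax⟩
    have hpx : inner ℝ p p ≤ inner ℝ p x := hmax p hp
    have hnorm : ‖p - x‖ ^ 2 ≤ 0 := by
      rw [norm_sub_sq_real, h]
      nlinarith [norm_nonneg x, (mem_cl.1 hx).1]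
    exact (sub_eq_zero.1 (norm_eq_zero.1 (pow_eq_zero_iff two_ne_zero |>.1
      (hnorm.antisymm (sq_nonneg _))))).symm

section Causality

variable (P) in
/-- The linear cone cut out by the half-spaces of the polyhedron. -/
def linCone : Set (Fin (n + 1) → ℝ) := {x | ∀ i, mink (P.e i) x ≤ 0}

lemma add_mem_linCone (hx : x ∈ P.linCone) (hy : y ∈ P.linCone) : x + y ∈ P.linCone := fun i => by
  rw [mink_add_right]
  exact add_nonpos (hx i) (hy i)

lemma smul_mem_linCone (hx : x ∈ P.linCone) {c : ℝ} (hc : 0 ≤ c) : c • x ∈ P.linCone := fun i => by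
  rw [mink_smul_right]
  exact mul_nonpos_of_nonneg_of_nonpos hc (hx i)

lemma kleinMap_mem_idealVerts (hx : x ∈ P.linCone) (h : mink x x = 0) (h0 : 0 < x 0) :
    kleinMap x ∈ P.idealVerts := by
  have hnorm : ‖kleinMap x‖ = 1 := by
    rw [mink_self_eq_mul_norm_sq_sub_one h0.ne', mul_eq_zero_iff_left (pow_pos h0 2).ne',
      sub_eq_zero] at h
    exact (pow_eq_one_iff_of_nonneg (norm_nonneg _) two_ne_zero).1 h
  refine ⟨mem_verts_of_norm_eq_one (mem_cl.2 ⟨hnorm.le, fun i => ?_⟩) hnorm, hnorm⟩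
  exact (mink_kleinLift_nonpos_iff h0).2 (hx i)

lemma linCone_inter_futureCone_mem_nhds (hq : ‖q‖ < 1)
    (hqP : ∀ i, mink (P.e i) (kleinLift q) < 0) :
    P.linCone ∩ futureCone n ∈ nhds (kleinLift q) := by
  refine Filter.inter_mem ?_ (futureCone_mem_nhds ?_ (by simp))
  · filter_upwards [Filter.eventually_all.2 fun i =>
      (continuous_mink_right (P.e i)).continuousAt.eventually_lt continuousAt_const (hqP i)]
      with y hy i using (hy i).le
  · rw [mink_kleinLift_self]
    nlinarith [norm_nonneg q]

/-- The ray from `y` in the direction `x` leaves the light cone at an ideal vertex, or at the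
origin. -/
lemma exists_vert_mem_span_pair (hx : x ∈ P.linCone) (hxF : x ∉ futureCone n)
    (hy : y ∈ P.linCone) (hyF : y ∈ futureCone n) :
    ∃ z ∈ insert 0 (kleinLift '' P.verts), y ∈ Submodule.span ℝ {z, x} := by
  obtain ⟨t, ht, hfr⟩ := exists_add_smul_mem_frontier hxF hyF
  have hnull := mink_self_eq_zero_of_mem_frontier hfr
  have hexit : y = (y + t • x) + (-t) • x := by module
  rcases (isClosed_futureCone.frontier_subset hfr).2.eq_or_lt with h0 | hpos
  · refine ⟨0, Set.mem_insert _ _, Submodule.mem_span_pair.2 ⟨0, -t, ?_⟩⟩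
    rw [hexit, eq_zero_of_mink_self_nonpos h0.symm hnull.le]
    simp
  · refine ⟨_, Set.mem_insert_of_mem _ (Set.mem_image_of_mem _ (kleinMap_mem_idealVerts
      (add_mem_linCone hy (smul_mem_linCone hx ht)) hnull hpos).1),
      Submodule.mem_span_pair.2 ⟨(y + t • x) 0, -t, ?_⟩⟩
    rw [smul_kleinLift_kleinMap hpos.ne', ← hexit]

/-- Otherwise infinitely many points of a generic line through the cone would lie in the planes
spanned by `x` and one of the finitely many ideal vertices. -/
lemma mem_futureCone (hn : 2 ≤ n) (hfin : P.verts.Finite) (hx : x ∈ P.linCone) :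
    x ∈ futureCone n := by
  by_contra hxF
  obtain ⟨q, hq, hqP⟩ := P.exists_interior_point
  have hZ : (insert 0 (kleinLift '' P.verts)).Finite := (hfin.image _).insert 0
  obtain ⟨u, hu⟩ := exists_forall_notMem_span_pair
    (by rw [Module.finrank_fin_fun]; omega) hZ x
  have hinf : {s : ℝ | kleinLift q + s • u ∈ P.linCone ∩ futureCone n}.Infinite := by
    have hline : Continuous fun s : ℝ => kleinLift q + s • u := by fun_prop
    refine infinite_of_mem_nhds 0 (hline.continuousAt.preimage_mem_nhds ?_)
    simpa using linCone_inter_futureCone_mem_nhds hq hqP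
  choose! f hfZ hf using fun (s : ℝ) (hs : kleinLift q + s • u ∈ P.linCone ∩ futureCone n) =>
    exists_vert_mem_span_pair hx hxF hs.1 hs.2
  obtain ⟨s, hs, t, ht, hne, hst⟩ := hinf.exists_ne_map_eq_of_mapsTo hfZ hZ
  refine hu _ (hfZ s hs) ?_
  have hsub := Submodule.sub_mem _ (hf s hs) (hst ▸ hf t ht)
  rw [add_sub_add_left_eq_sub, ← sub_smul] at hsub
  exact (Submodule.smul_mem_iff _ (sub_ne_zero.2 hne)).1 hsub

lemma mem_cl_of_kleinLift_mem_linCone (hn : 2 ≤ n) (hfin : P.verts.Finite)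
    (hp : kleinLift p ∈ P.linCone) : p ∈ P.cl :=
  mem_cl.2 ⟨kleinLift_mem_futureCone_iff.1 (mem_futureCone hn hfin hp), hp⟩

end Causality

section Ridge

variable (P) in
/-- The points of `P̄` lying on the walls `i` and `j`: in the generic case, a face of codimension
two. -/
def ridge (i j : Fin P.m) : Set (EuclideanSpace ℝ (Fin n)) :=
  {p | p ∈ P.cl ∧ mink (P.e i) (kleinLift p) = 0 ∧ mink (P.e j) (kleinLift p) = 0}

lemma isExposed_ridge (i j : Fin P.m) : IsExposed ℝ P.cl (P.ridge i j) := by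
  rintro ⟨p, hp, hpi, hpj⟩
  refine ⟨innerSL ℝ (spatial (P.e i) + spatial (P.e j)), ?_⟩
  rw [mink_kleinLift] at hpi hpj
  ext x
  simp only [ridge, Set.mem_ofPred_eq, innerSL_apply_apply, inner_add_left, mink_kleinLift]
  constructor
  · rintro ⟨hx, hxi, hxj⟩
    refine ⟨hx, fun y hy => ?_⟩
    have hyi := (mem_cl.1 hy).2 i
    have hyj := (mem_cl.1 hy).2 j
    rw [mink_kleinLift] at hyi hyj
    linarith
  · rintro ⟨hx, hmax⟩
    have hpx := hmax p hp
    have hxi := (mem_cl.1 hx).2 i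
    have hxj := (mem_cl.1 hx).2 j
    rw [mink_kleinLift] at hxi hxj
    exact ⟨hx, by linarith, by linarith⟩

lemma faceInHyperplane_ridge_left (i j : Fin P.m) : P.faceInHyperplane (P.e i) (P.ridge i j) :=
  fun x hx hxF => by rw [mink_eq_mul_mink_kleinLift hx.1.2.ne', hxF.2.1, mul_zero]

lemma faceInHyperplane_ridge_right (i j : Fin P.m) : P.faceInHyperplane (P.e j) (P.ridge i j) :=
  fun x hx hxF => by rw [mink_eq_mul_mink_kleinLift hx.1.2.ne', hxF.2.2, mul_zero]

lemma linearIndependent_spatial {e f : Fin (n + 1) → ℝ} (hf : spatial f ≠ 0)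
    (hep : mink e (kleinLift p) = 0) (hfp : mink f (kleinLift p) = 0) (hfx : mink f x = 0)
    (hex : mink e x ≠ 0) : LinearIndependent ℝ ![spatial f, spatial e] := by
  refine (LinearIndependent.pair_iff' hf).2 fun a ha => hex ?_
  rw [mink_kleinLift, sub_eq_zero] at hep hfp
  have h0 : e 0 = a * f 0 := by rw [← hep, ← ha, real_inner_smul_left, hfp]
  rw [mink_eq_inner, ← ha, h0, real_inner_smul_left, mul_assoc, ← mul_sub, ← mink_eq_inner, hfx,
    mul_zero]

lemma mem_orthogonal_span_pair {E : Type*} [NormedAddCommGroup E] [InnerProductSpace ℝ E]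
    {u v w : E} : w ∈ (Submodule.span ℝ {u, v})ᗮ ↔ inner ℝ u w = 0 ∧ inner ℝ v w = 0 := by
  rw [Submodule.span_insert, ← Submodule.inf_orthogonal, Submodule.mem_inf,
    Submodule.mem_orthogonal_singleton_iff_inner_right,
    Submodule.mem_orthogonal_singleton_iff_inner_right]

/-- A point in the relative interior of a face of codimension two of the cone, lying on the walls
`i` and `j`; its interiority is expressed along lines. -/
structure IsRidgePoint (i j : Fin P.m) (z : Fin (n + 1) → ℝ) : Prop where
  left : mink (P.e i) z = 0
  right : mink (P.e j) z = 0
  exists_add_smul_mem : ∀ w, mink (P.e i) w = 0 → mink (P.e j) w = 0 →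
    ∃ ε > (0 : ℝ), z + ε • w ∈ P.linCone

lemma isRidgePoint_of_forall_neg
    (hcut : ∀ x, mink (P.e i) x = 0 → (∀ k ∈ A, mink (P.e k) x ≤ 0) → x ∈ P.linCone)
    (hzi : mink (P.e i) z = 0) (hzj : mink (P.e j) z = 0)
    (hz : ∀ k ∈ A, k ≠ i → k ≠ j → mink (P.e k) z < 0) : IsRidgePoint i j z := by
  refine ⟨hzi, hzj, fun w hwi hwj => ?_⟩
  obtain ⟨ε, hε, h⟩ :=
    exists_pos_forall_add_mul_neg (fun k => mink (P.e k) z) fun k => mink (P.e k) w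
  refine ⟨ε, hε, hcut _ (by simp [hzi, hwi]) fun k hk => ?_⟩
  rw [mink_add_right, mink_smul_right]
  by_cases hki : k = i
  · simp [hki, hzi, hwi]
  by_cases hkj : k = j
  · simp [hkj, hzj, hwj]
  exact (h k (hz k hk hki hkj)).1.le

namespace IsRidgePoint

lemma mem_linCone (hz : IsRidgePoint i j z) : z ∈ P.linCone := by
  obtain ⟨ε, -, h⟩ := hz.exists_add_smul_mem 0 (by simp) (by simp)
  simpa using h

lemma smul (hz : IsRidgePoint i j z) {c : ℝ} (hc : 0 < c) : IsRidgePoint i j (c • z) := by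
  refine ⟨by simp [hz.left], by simp [hz.right], fun w hwi hwj => ?_⟩
  obtain ⟨ε, hε, h⟩ := hz.exists_add_smul_mem w hwi hwj
  refine ⟨c * ε, mul_pos hc hε, ?_⟩
  rw [mul_smul, ← smul_add]
  exact smul_mem_linCone h hc.le

/-- Were the apex a ridge point, the cone would contain a line. -/
lemma ne_zero (hn : 2 ≤ n) (hfin : P.verts.Finite) (hz : IsRidgePoint i j z) : z ≠ 0 := by
  rintro rfl
  have hmem : ∀ w, mink (P.e i) w = 0 → mink (P.e j) w = 0 → w ∈ futureCone n :=
    fun w hwi hwj => by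
      obtain ⟨ε, hε, h⟩ := hz.exists_add_smul_mem w hwi hwj
      rw [zero_add] at h
      simpa [smul_smul, hε.ne'] using
        smul_mem_futureCone (mem_futureCone hn hfin h) (inv_pos.2 hε).le
  obtain ⟨w, hw, hw0⟩ := Submodule.exists_mem_ne_zero_of_ne_bot
    (LinearMap.ker_ne_bot_of_finrank_lt
      (f := (minkForm n (P.e i)).prod (minkForm n (P.e j)))
      (by rw [Module.finrank_prod, Module.finrank_self, Module.finrank_fin_fun]; omega))
  obtain ⟨hwi, hwj⟩ : mink (P.e i) w = 0 ∧ mink (P.e j) w = 0 := by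
    simpa [LinearMap.mem_ker, Prod.ext_iff] using hw
  have hpos := hmem w hwi hwj
  have hneg := hmem ((-1 : ℝ) • w) (by rw [mink_smul_right, hwi, mul_zero])
    (by rw [mink_smul_right, hwj, mul_zero])
  have hw_nonpos : w 0 ≤ 0 := by simpa using hneg.2
  exact hw0 (eq_zero_of_mink_self_nonpos (hw_nonpos.antisymm hpos.2) hpos.1)

lemma exists_kleinLift (hn : 2 ≤ n) (hfin : P.verts.Finite) (hz : IsRidgePoint i j z) :
    ∃ p, IsRidgePoint i j (kleinLift p) := by
  obtain ⟨hcausal, hz0⟩ := mem_futureCone hn hfin hz.mem_linCone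
  replace hz0 : 0 < z 0 := hz0.lt_of_ne fun h0 =>
    hz.ne_zero hn hfin (eq_zero_of_mink_self_nonpos h0.symm hcausal)
  refine ⟨kleinMap z, ?_⟩
  rw [(eq_inv_smul_iff₀ hz0.ne').2 (smul_kleinLift_kleinMap hz0.ne')]
  exact hz.smul (inv_pos.2 hz0)

lemma mem_ridge (hn : 2 ≤ n) (hfin : P.verts.Finite) (hp : IsRidgePoint i j (kleinLift p)) :
    p ∈ P.ridge i j :=
  ⟨mem_cl_of_kleinLift_mem_linCone hn hfin hp.mem_linCone, hp.left, hp.right⟩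

lemma vectorSpan_ridge (hn : 2 ≤ n) (hfin : P.verts.Finite)
    (hp : IsRidgePoint i j (kleinLift p)) :
    vectorSpan ℝ (P.ridge i j) = (Submodule.span ℝ {spatial (P.e j), spatial (P.e i)})ᗮ := by
  apply le_antisymm
  · rw [vectorSpan, Submodule.span_le]
    rintro - ⟨a, ⟨-, hai, haj⟩, b, ⟨-, hbi, hbj⟩, rfl⟩
    rw [mink_kleinLift] at hai haj hbi hbj
    change a - b ∈ (_ : Submodule ℝ _)
    rw [mem_orthogonal_span_pair, inner_sub_right, inner_sub_right]
    exact ⟨by linarith, by linarith⟩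
  · intro d hd
    obtain ⟨hdj, hdi⟩ := mem_orthogonal_span_pair.1 hd
    have hzero : ∀ e : Fin (n + 1) → ℝ, inner ℝ (spatial e) d = 0 →
        mink e (kleinLift (p + d) - kleinLift p) = 0 := fun e he => by
      simp [mink_kleinLift, inner_add_right, he]
    obtain ⟨ε, hε, h⟩ := hp.exists_add_smul_mem _ (hzero _ hdi) (hzero _ hdj)
    rw [← kleinLift_add_smul] at h
    have hmem : p + ε • d ∈ P.ridge i j := by
      refine ⟨mem_cl_of_kleinLift_mem_linCone hn hfin h, ?_, ?_⟩
      · rw [mink_kleinLift_add_smul, hp.left, hdi, mul_zero, add_zero]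
      · rw [mink_kleinLift_add_smul, hp.right, hdj, mul_zero, add_zero]
    have hsub := vsub_mem_vectorSpan ℝ hmem (hp.mem_ridge hn hfin)
    rw [vsub_eq_sub, add_sub_cancel_left] at hsub
    exact (Submodule.smul_mem_iff _ hε.ne').1 hsub

lemma sdim_ridge (hn : 2 ≤ n) (hfin : P.verts.Finite) (hp : IsRidgePoint i j (kleinLift p))
    (hxi : mink (P.e i) x ≠ 0) (hxj : mink (P.e j) x = 0) : sdim (P.ridge i j) = n - 2 := by
  have hind := linearIndependent_spatial (spatial_ne_zero j) hp.left hp.right hxj hxi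
  have hrank := finrank_span_eq_card hind
  have hsum := Submodule.finrank_add_finrank_orthogonal
    (Submodule.span ℝ {spatial (P.e j), spatial (P.e i)})
  rw [Matrix.range_cons_cons_empty, Fintype.card_fin] at hrank
  rw [hrank, ← hp.vectorSpan_ridge hn hfin, finrank_euclideanSpace_fin] at hsum
  rw [sdim]
  omega

lemma mink_eq_zero (hn : 2 ≤ n) (hfin : P.verts.Finite) (hra : P.IsRightAngled)
    (hz : IsRidgePoint i j z) (hxi : mink (P.e i) x ≠ 0) (hxj : mink (P.e j) x = 0) :
    mink (P.e i) (P.e j) = 0 := by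
  obtain ⟨p, hp⟩ := hz.exists_kleinLift hn hfin
  exact hra i j (fun hij => hxi (hij ▸ hxj)) ⟨P.ridge i j,
    ⟨isExposed_ridge i j, ⟨p, hp.mem_ridge hn hfin⟩, hp.sdim_ridge hn hfin hxi hxj⟩,
    faceInHyperplane_ridge_left i j, faceInHyperplane_ridge_right i j⟩

end IsRidgePoint

end Ridge

section Walls

/-- A set of walls cutting out the polyhedron, each of which carries a facet. -/
structure IsFacetSystem (A : Finset (Fin P.m)) : Prop where
  mem_linCone : ∀ x, (∀ i ∈ A, mink (P.e i) x ≤ 0) → x ∈ P.linCone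
  exists_facet_point : ∀ k ∈ A, ∃ z, mink (P.e k) z = 0 ∧ ∀ l ∈ A, l ≠ k → mink (P.e l) z < 0

variable (P) in
lemma exists_isFacetSystem : ∃ A : Finset (Fin P.m), IsFacetSystem A := by
  obtain ⟨q, -, hq⟩ := P.exists_interior_point
  obtain ⟨A, -, hA, hfacet⟩ := exists_irredundant (fun i => minkForm n (P.e i)) ⊤ Finset.univ
    (p := kleinLift q) trivial fun i _ => hq i
  simp only [minkForm_apply, Submodule.mem_top, true_implies, true_and] at hA hfacet
  exact ⟨A, fun x hx i => hA x hx i (Finset.mem_univ i), hfacet⟩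

namespace IsFacetSystem

/-- The facet on the wall `i` is cut out by the walls carrying a facet of it, and these meet the
wall `i` in a face of codimension two. -/
lemma exists_orthogonal_walls (hA : IsFacetSystem A) (hn : 2 ≤ n) (hfin : P.verts.Finite)
    (hra : P.IsRightAngled) (hi : i ∈ A) :
    ∃ J : Finset (Fin P.m), (∀ k ∈ J, mink (P.e i) (P.e k) = 0) ∧
      ∀ x, mink (P.e i) x = 0 → (∀ k ∈ J, mink (P.e k) x ≤ 0) → x ∈ P.linCone := by
  classical
  obtain ⟨y, hyi, hy⟩ := hA.exists_facet_point i hi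
  obtain ⟨J, hJA, hJ, hfacet⟩ := exists_irredundant (fun k => minkForm n (P.e k))
    (LinearMap.ker (minkForm n (P.e i))) (A.erase i) (p := y) hyi fun k hk =>
      hy k (Finset.mem_of_mem_erase hk) (Finset.ne_of_mem_erase hk)
  simp only [minkForm_apply, LinearMap.mem_ker] at hJ hfacet
  have hcut : ∀ x, mink (P.e i) x = 0 → (∀ k ∈ J, mink (P.e k) x ≤ 0) → x ∈ P.linCone :=
    fun x hxi hx => hA.mem_linCone x fun k hk => by
      by_cases hki : k = i
      · exact hki ▸ hxi.le
      · exact hJ x hxi hx k (Finset.mem_erase.2 ⟨hki, hk⟩)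
  refine ⟨J, fun k hk => ?_, hcut⟩
  obtain ⟨hki, hkA⟩ := Finset.mem_erase.1 (hJA hk)
  obtain ⟨z, hzi, hzk, hz⟩ := hfacet k hk
  obtain ⟨u, huk, hu⟩ := hA.exists_facet_point k hkA
  exact (isRidgePoint_of_forall_neg hcut hzi hzk fun l hl _ => hz l hl).mink_eq_zero hn hfin hra
    (hu i hi hki.symm).ne huk

lemma sub_smul_mem_linCone (hA : IsFacetSystem A) (hn : 2 ≤ n) (hfin : P.verts.Finite)
    (hra : P.IsRightAngled) (hi : i ∈ A) (hx : x ∈ P.linCone) :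
    x - mink (P.e i) x • P.e i ∈ P.linCone := by
  obtain ⟨J, hJ, hcut⟩ := hA.exists_orthogonal_walls hn hfin hra hi
  refine hcut _ (by simp [P.unit]) fun k hk => ?_
  simpa [mink_comm (P.e k), hJ k hk] using hx k

lemma mink_nonpos (hA : IsFacetSystem A) (hn : 2 ≤ n) (hfin : P.verts.Finite)
    (hra : P.IsRightAngled) (hi : i ∈ A) (hj : j ∈ A) (hij : i ≠ j) :
    mink (P.e i) (P.e j) ≤ 0 := by
  obtain ⟨x, hxj, hx⟩ := hA.exists_facet_point j hj
  have hxP : x ∈ P.linCone := hA.mem_linCone x fun k hk => by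
    by_cases hkj : k = j
    · exact hkj ▸ hxj.le
    · exact (hx k hk hkj).le
  have hproj := hA.sub_smul_mem_linCone hn hfin hra hi hxP j
  rw [mink_sub_right, mink_smul_right, hxj, mink_comm (P.e j)] at hproj
  nlinarith [hx i hi hij]

/-- The orthogonal projection of an interior point to the intersection of the two walls. -/
lemma exists_isRidgePoint (hA : IsFacetSystem A) (hn : 2 ≤ n) (hfin : P.verts.Finite)
    (hra : P.IsRightAngled) (hi : i ∈ A) (hj : j ∈ A) (hij : i ≠ j)
    (hg : -1 < mink (P.e i) (P.e j)) : ∃ z, IsRidgePoint i j z := by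
  obtain ⟨q, -, hq⟩ := P.exists_interior_point
  have hg0 := hA.mink_nonpos hn hfin hra hi hj hij
  have hji := mink_comm (P.e j) (P.e i)
  set g := mink (P.e i) (P.e j)
  set r := mink (P.e i) (kleinLift q) with hr
  set s := mink (P.e j) (kleinLift q) with hs
  have hr0 : r < 0 := hq i
  have hs0 : s < 0 := hq j
  have hdet : 0 < 1 - g ^ 2 := by nlinarith
  set a := (r - g * s) / (1 - g ^ 2) with ha
  set b := (s - g * r) / (1 - g ^ 2) with hb
  have ha0 : a ≤ 0 := div_nonpos_of_nonpos_of_nonneg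
    (by nlinarith [mul_nonneg_of_nonpos_of_nonpos hg0 hs0.le]) hdet.le
  have hb0 : b ≤ 0 := div_nonpos_of_nonpos_of_nonneg
    (by nlinarith [mul_nonneg_of_nonpos_of_nonpos hg0 hr0.le]) hdet.le
  refine ⟨kleinLift q - a • P.e i - b • P.e j,
    isRidgePoint_of_forall_neg (fun x _ => hA.mem_linCone x) ?_ ?_ fun k hk hki hkj => ?_⟩ <;>
    simp only [mink_sub_right, mink_smul_right]
  · rw [P.unit, ← hr, ha, hb]
    field_simp
    ring
  · rw [P.unit, ← hs, hji, ha, hb]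
    field_simp
    ring
  · nlinarith [hq k, mul_nonneg_of_nonpos_of_nonpos ha0 (hA.mink_nonpos hn hfin hra hk hi hki),
      mul_nonneg_of_nonpos_of_nonpos hb0 (hA.mink_nonpos hn hfin hra hk hj hkj)]

lemma mink_eq_zero_or_le (hA : IsFacetSystem A) (hn : 2 ≤ n) (hfin : P.verts.Finite)
    (hra : P.IsRightAngled) (hi : i ∈ A) (hj : j ∈ A) (hij : i ≠ j) :
    mink (P.e i) (P.e j) = 0 ∨ mink (P.e i) (P.e j) ≤ -1 := by
  refine or_iff_not_imp_right.2 fun hg => ?_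
  obtain ⟨z, hz⟩ := hA.exists_isRidgePoint hn hfin hra hi hj hij (not_le.1 hg)
  obtain ⟨x, hxj, hx⟩ := hA.exists_facet_point j hj
  exact hz.mink_eq_zero hn hfin hra (hx i hi hij).ne hxj

end IsFacetSystem

lemma exists_rightAngledCone (hn : 2 ≤ n) (hfin : P.verts.Finite) (hra : P.IsRightAngled) :
    ∃ (A : Finset (Fin P.m)) (D : RightAngledCone n A), D.cone ⊆ P.linCone := by
  obtain ⟨A, hA⟩ := P.exists_isFacetSystem
  obtain ⟨q, hq, hqP⟩ := P.exists_interior_point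
  have hcut : ∀ x, (∀ i : A, mink (P.e i) x ≤ 0) → x ∈ P.linCone := fun x hx =>
    hA.mem_linCone x fun i hi => hx ⟨i, hi⟩
  refine ⟨A, { e := fun i => P.e i
               unit := fun i => P.unit i
               gram := fun i j hij => hA.mink_eq_zero_or_le hn hfin hra i.2 j.2
                 (Subtype.coe_ne_coe.2 hij)
               pt := kleinLift q
               pt_timelike := ?_
               pt_neg := fun i => hqP i
               causal := fun x hx => mem_futureCone hn hfin (hcut x hx) }, hcut⟩
  rw [mink_kleinLift_self]
  nlinarith [norm_nonneg q]

lemma card_idealOn_le_vInf (hfin : P.verts.Finite) {ι : Type*} [Fintype ι]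
    {D : RightAngledCone n ι} (hD : D.cone ⊆ P.linCone) (S : Finset ι) :
    (D.idealOn S).card ≤ P.vInf := by
  have hheight : ∀ v ∈ D.idealOn S, v 0 = 1 := fun v hv =>
    RightAngledCone.apply_zero_of_mem_verts (RightAngledCone.mem_idealOn.1 hv).1.mem
  rw [vInf, ← Set.ncard_coe_finset]
  refine Set.ncard_le_ncard_of_injOn kleinMap (fun v hv => ?_) (fun v hv w hw h => ?_)
    (hfin.subset fun v hv => hv.1)
  · have hvD := (RightAngledCone.mem_idealOn.1 hv).1
    exact kleinMap_mem_idealVerts (hD (RightAngledCone.mem_cone_of_mem_verts hvD.mem)) hvD.null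
      (by simp [hheight v hv])
  · rw [← smul_kleinLift_kleinMap (x := v) (by simp [hheight v hv]),
      ← smul_kleinLift_kleinMap (x := w) (by simp [hheight w hw]), h, hheight v hv, hheight w hw]

end Walls

end HypPolyhedron

theorem ideal_vertices_lower_bound_general {k : ℕ} (P : HypPolyhedron (k + 5))
    (hfin : P.verts.Finite) (hra : P.IsRightAngled) : (faceBound k).2 ≤ P.vInf := by
  obtain ⟨A, D, hD⟩ := HypPolyhedron.exists_rightAngledCone (by omega) hfin hra
  exact (D.facesAtLeast_faceBound k ∅ (by simp [RightAngledCone.IsClique]) (by simp)).2.trans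
    (HypPolyhedron.card_idealOn_le_vInf hfin hD ∅)

/-- For `5 ≤ n ≤ 12`, every finite-volume non-compact right-angled convex hyperbolic
`n`-polyhedron has at least `vₙ` ideal vertices. -/
theorem ideal_vertices_lower_bound (n : ℕ) (hn : 5 ≤ n) (hn' : n ≤ 12)
    (P : HypPolyhedron n) (hfv : P.FiniteVolume) (hra : P.IsRightAngled)
    (hnc : ¬ P.IsCompactPoly) :
    idealVertexBound n ≤ P.vInf := by
  obtain ⟨k, rfl⟩ := Nat.exists_eq_add_of_le' hn
  exact (idealVertexBound_le_faceBound (by omega)).trans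
    (ideal_vertices_lower_bound_general P hfv.1 hra)
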